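/- Let 1/2 < γ ≤ 1, let A : ℝ³ → ℝ³⊗ℝ³ satisfy ‖∇A‖_2 < ∞, and let X ∈ 𝒞^γ. Then there exists a time T₀ > 0, depending only on ‖∇A‖_1, ‖X‖_γ^* and γ, such that the integral equation Y(t)_ξ = X_ξ + ∫_0^t V^{Y(s)}(Y(s)_ξ) ds, for ξ ∈ [0,1] and t ∈ [0,T₀], has a unique solution Y ∈ C([0,T₀], 𝒞^γ) bounded in 𝒞^γ. -/

import Mathlib

/-!
The equation is an autonomous ordinary differential equation in the Banach space `𝒞^γ` of closed
`γ`-Hölder curves, driven by the vector field `Y ↦ (ξ ↦ V^Y(Y_ξ))`; the proof shows that this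
vector field is Lipschitz on balls and applies Picard–Lindelöf and Grönwall.

*Young integration.* A discrete sewing lemma (`sewing_aux`) bounds a Riemann–Stieltjes sum of `f`
against `Z`, minus its one-step approximation, by a constant times `‖f‖_γ ‖Z‖_γ`. For a closed
curve `Z` over `[0,1]` the one-step term `f_0 (Z_1 - Z_0)` vanishes, so only the Hölder constants of
`f` and `Z` matter (`rsSum_le`); this is why no bound on `A` itself is needed. For existence of the
limit (`young_exists`), the sums over uniform partitions are bounded, hence have a cluster point;
since their increments over `[s,t]` equal `f_s (Z_t - Z_s)` up to `O(|t - s|^{2γ})` with `2γ > 1`,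
the sums over any partition of small mesh are close to that cluster point.

*Velocity estimates.* First, second and third order finite differences of `A` are controlled by
`∇A`, `∇²A`, `∇³A` (`NablaBdd.fdBounds`). Together with `rsSum_le` they give
`‖V^Y(Y)‖ ≤ C (‖∇A‖ + ‖∇²A‖)(‖Y‖² + ‖Y‖³)` (`velField_norm_le`) and, using also `∇³A`, a Lipschitz
bound on balls (`vel_diff_sup`, `vel_diff_hol`, `velField_lipBalls`).

*Conclusion.* The Picard–Lindelöf existence time depends only on the bound for the vector field on
the unit ball around `X`, hence only on `‖∇A‖_1`, `‖X‖_γ^*` and `γ`; the Lipschitz constant, which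
involves `∇³A`, does not affect this time (`integral_equation`).
-/

/- Common framework: Hölder curves on [0,1], Riemann–Stieltjes/Young/rough integrals as
limits of (compensated) partition sums, controlled paths, and covariations. -/

noncomputable section

open Set Filter Topology MeasureTheory
open scoped ENNReal

/-- Three dimensional Euclidean space. -/
abbrev E3 : Type := EuclideanSpace ℝ (Fin 3)

/-- `ℝ³ ⊗ ℝ³`, realized as (continuous) linear endomorphisms of `ℝ³`. -/
abbrev M3 : Type := E3 →L[ℝ] E3

/-- Outer (tensor) product `a ⊗ b` of two vectors, as the linear map `v ↦ ⟪b, v⟫ • a`. -/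
def oProd (a b : E3) : M3 := (innerSL ℝ b).smulRight a

/-- The canonical basis vectors of `ℝ³`. -/
def e3 (k : Fin 3) : E3 := EuclideanSpace.single k 1

/-- The `i`-th component of a vector of `ℝ³`. -/
def ecomp (i : Fin 3) (v : E3) : ℝ := @inner ℝ _ _ (e3 i) v

/-- The `(i,k)` entry of a matrix. -/
def mentry (i k : Fin 3) (M : M3) : ℝ := ecomp i (M (e3 k))

/-- `γ`-Hölder seminorm `‖X‖_γ` over the interval `[0,1]`. -/
def hSemi {F : Type*} [NormedAddCommGroup F] (γ : ℝ) (X : ℝ → F) : ℝ :=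
  sSup {r | ∃ s ∈ Icc (0:ℝ) 1, ∃ t ∈ Icc (0:ℝ) 1, s ≠ t ∧ r = ‖X s - X t‖ / |s - t| ^ γ}

/-- Supremum norm `‖X‖_∞` over the interval `[0,1]`. -/
def sNorm {F : Type*} [NormedAddCommGroup F] (X : ℝ → F) : ℝ :=
  sSup {r | ∃ s ∈ Icc (0:ℝ) 1, r = ‖X s‖}

/-- The norm `‖X‖_γ^* = ‖X‖_∞ + ‖X‖_γ`. -/
def hStar {F : Type*} [NormedAddCommGroup F] (γ : ℝ) (X : ℝ → F) : ℝ :=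
  sNorm X + hSemi γ X

/-- `X` is `γ`-Hölder continuous on `[0,1]`. -/
def HolderOn {F : Type*} [NormedAddCommGroup F] (γ : ℝ) (X : ℝ → F) : Prop :=
  ∃ C : ℝ, ∀ s ∈ Icc (0:ℝ) 1, ∀ t ∈ Icc (0:ℝ) 1, ‖X s - X t‖ ≤ C * |s - t| ^ γ

/-- A closed continuous curve parametrized by `[0,1]`. -/
def ClosedCurve {F : Type*} [NormedAddCommGroup F] (X : ℝ → F) : Prop :=
  ContinuousOn X (Icc (0:ℝ) 1) ∧ X 0 = X 1

/-- Membership in `𝒞^γ`: closed curve with finite `γ`-Hölder norm. -/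
def MemC {F : Type*} [NormedAddCommGroup F] (γ : ℝ) (X : ℝ → F) : Prop :=
  ClosedCurve X ∧ HolderOn γ X

/-- A partition `a = t 0 ≤ t 1 ≤ ⋯ ≤ t n = b` of the interval `[a,b]`. -/
structure Ptn (a b : ℝ) where
  n : ℕ
  t : ℕ → ℝ
  first : t 0 = a
  last : t n = b
  mono : ∀ i < n, t i ≤ t (i + 1)

/-- The mesh of the partition is at most `δ`. -/
def Ptn.MeshLE {a b : ℝ} (P : Ptn a b) (δ : ℝ) : Prop :=
  ∀ i < P.n, P.t (i + 1) - P.t i ≤ δ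

/-- `I` is the limit of the partition sums `S P` as the mesh of `P` tends to zero. -/
def RSLimit {F : Type*} [NormedAddCommGroup F] (a b : ℝ) (S : Ptn a b → F) (I : F) : Prop :=
  ∀ ε > 0, ∃ δ > 0, ∀ P : Ptn a b, P.MeshLE δ → ‖S P - I‖ ≤ ε

/-- `‖∇^j φ‖ = sup_x ‖∇^j φ(x)‖`. -/
def tnorm {F : Type*} [NormedAddCommGroup F] [NormedSpace ℝ F] (j : ℕ) (φ : E3 → F) : ℝ :=
  sSup (Set.range fun x => ‖iteratedFDeriv ℝ j φ x‖)

/-- `‖∇^m φ‖_n = Σ_{k=0}^n ‖∇^{m+k} φ‖`. -/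
def nablaNorm {F : Type*} [NormedAddCommGroup F] [NormedSpace ℝ F]
    (m n : ℕ) (φ : E3 → F) : ℝ :=
  ∑ k ∈ Finset.range (n + 1), tnorm (m + k) φ

/-- `‖∇^m φ‖_n < ∞` : `φ` is `(m+n)` times continuously differentiable with
`sup_x ‖∇^k φ(x)‖ < ∞` for every `m ≤ k ≤ m+n`. -/
def NablaBdd {F : Type*} [NormedAddCommGroup F] [NormedSpace ℝ F] (m n : ℕ) (φ : E3 → F) : Prop :=
  ContDiff ℝ (m + n) φ ∧
    ∀ k : ℕ, m ≤ k → k ≤ m + n → BddAbove (Set.range fun x => ‖iteratedFDeriv ℝ k φ x‖)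

/-- Riemann–Stieltjes sum for the line integral `∫_0^1 A(x - Z_η) dZ_η`. -/
def youngRS (A : E3 → M3) (Z : ℝ → E3) (x : E3) {a b : ℝ} (P : Ptn a b) : E3 :=
  ∑ i ∈ Finset.range P.n, A (x - Z (P.t i)) (Z (P.t (i + 1)) - Z (P.t i))

/-- `V = V^Z` is the Young velocity field `V^Z(x) = ∫_0^1 A(x - Z_η) dZ_η`, each value being
the limit of Riemann–Stieltjes sums. -/
def IsYoungVelocity (A : E3 → M3) (Z : ℝ → E3) (V : E3 → E3) : Prop :=
  ∀ x : E3, RSLimit 0 1 (fun P => youngRS A Z x P) (V x)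

/-- `C` is a constant realizing the Young estimate
`|∫_η^ξ (X_ρ - X_η) ⊗ dY_ρ| ≤ C ‖X‖_γ ‖Y‖_γ |ξ - η|^{2γ}`. -/
def YoungEstimate (γ C : ℝ) : Prop :=
  ∀ X Y : ℝ → E3, HolderOn γ X → HolderOn γ Y →
    ∀ η ∈ Icc (0:ℝ) 1, ∀ ξ ∈ Icc (0:ℝ) 1, η ≤ ξ →
      ∀ I : M3,
        RSLimit η ξ (fun P => ∑ i ∈ Finset.range P.n,
          oProd (X (P.t i) - X η) (Y (P.t (i + 1)) - Y (P.t i))) I →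
        ‖I‖ ≤ C * hSemi γ X * hSemi γ Y * (ξ - η) ^ (2 * γ)

/-- Continuity of `t ↦ Y(t)` from `[0,T]` into `𝒞^γ` (with the norm `‖·‖_γ^*`). -/
def ContXT (γ T : ℝ) (Y : ℝ → ℝ → E3) : Prop :=
  ∀ t ∈ Icc 0 T, ∀ ε > 0, ∃ δ > 0, ∀ s ∈ Icc 0 T, |s - t| ≤ δ →
    hStar γ (fun ξ => Y s ξ - Y t ξ) ≤ ε

/-- The norm `‖Y‖_{𝐗_T} = sup_{t ∈ [0,T]} ‖Y(t)‖_γ^*`. -/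
def xnorm (γ T : ℝ) (Y : ℝ → ℝ → E3) : ℝ :=
  sSup {r | ∃ t ∈ Icc 0 T, r = hStar γ (Y t)}

/-- Membership in `𝐗_T = C([0,T], 𝒞^γ)`. -/
def MemXT (γ T : ℝ) (Y : ℝ → ℝ → E3) : Prop :=
  (∀ t ∈ Icc 0 T, MemC γ (Y t)) ∧ ContXT γ T Y

/-- The map `F(Y)(t)_ξ = X_ξ + ∫_0^t v_s(Y(s)_ξ) ds`. -/
def Fmap (X : ℝ → E3) (v : ℝ → E3 → E3) (Y : ℝ → ℝ → E3) : ℝ → ℝ → E3 :=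
  fun t ξ => X ξ + ∫ s in (0:ℝ)..t, v s (Y s ξ)

/-- The controlled derivative of `F(Y)`:
`F(Y)'(t)_ξ = Id + ∫_0^t ∇v_s(Y(s)_ξ) ∘ Y'(s)_ξ ds`. -/
def Fmap' (v : ℝ → E3 → E3) (Y : ℝ → ℝ → E3) (Y' : ℝ → ℝ → M3) : ℝ → ℝ → M3 :=
  fun t ξ => ContinuousLinearMap.id ℝ E3
    + ∫ s in (0:ℝ)..t, (fderiv ℝ (v s) (Y s ξ)).comp (Y' s ξ)

/-- `Y` solves the vortex filament equation on `[0,T]` with initial condition `X`,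
the velocity fields being given by Young line integrals. -/
def IsYoungSolution (T : ℝ) (A : E3 → M3) (X : ℝ → E3) (Y : ℝ → ℝ → E3) : Prop :=
  ∃ v : ℝ → E3 → E3, (∀ s ∈ Icc 0 T, IsYoungVelocity A (Y s) (v s)) ∧
    ∀ t ∈ Icc 0 T, ∀ ξ ∈ Icc (0:ℝ) 1, Y t ξ = X ξ + ∫ s in (0:ℝ)..t, v s (Y s ξ)

/-- The same, on the half open interval `[0,T)`. -/
def IsYoungSolutionLt (T : ℝ) (A : E3 → M3) (X : ℝ → E3) (Y : ℝ → ℝ → E3) : Prop :=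
  ∃ v : ℝ → E3 → E3, (∀ s ∈ Ico 0 T, IsYoungVelocity A (Y s) (v s)) ∧
    ∀ t ∈ Ico 0 T, ∀ ξ ∈ Icc (0:ℝ) 1, Y t ξ = X ξ + ∫ s in (0:ℝ)..t, v s (Y s ξ)

/-- `β`-Hölder norm of a two-parameter function on `[0,1]²` (vanishing on the diagonal). -/
def rnorm {F : Type*} [NormedAddCommGroup F] (β : ℝ) (W : ℝ → ℝ → F) : ℝ :=
  sSup {r | ∃ s ∈ Icc (0:ℝ) 1, ∃ t ∈ Icc (0:ℝ) 1, s ≠ t ∧ r = ‖W s t‖ / |s - t| ^ β}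

/-- Finiteness of the `β`-Hölder norm of a two-parameter function. -/
def RBddOn {F : Type*} [NormedAddCommGroup F] (β : ℝ) (W : ℝ → ℝ → F) : Prop :=
  ∃ C : ℝ, ∀ s ∈ Icc (0:ℝ) 1, ∀ t ∈ Icc (0:ℝ) 1, ‖W s t‖ ≤ C * |s - t| ^ β

/-- `(X, 𝕏²)` is a `γ`-rough path: `X` is `γ`-Hölder, the area process `𝕏²` is continuous,
satisfies the compatibility (Chen) relation and has finite `2γ`-Hölder norm. -/
structure IsRoughPath (γ : ℝ) (X : ℝ → E3) (XX : ℝ → ℝ → M3) : Prop where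
  cont : ContinuousOn X (Icc (0:ℝ) 1)
  holder : HolderOn γ X
  cont2 : ContinuousOn (fun p : ℝ × ℝ => XX p.1 p.2) (Icc (0:ℝ) 1 ×ˢ Icc (0:ℝ) 1)
  chen : ∀ ξ ∈ Icc (0:ℝ) 1, ∀ η ∈ Icc (0:ℝ) 1, ∀ ρ ∈ Icc (0:ℝ) 1,
    XX ξ ρ - XX ξ η - XX η ρ = oProd (X ξ - X η) (X η - X ρ)
  bdd : RBddOn (2 * γ) XX

/-- Remainder `R^Y_{ηξ} = Y_ξ - Y_η - Y'_η (X_ξ - X_η)` of a controlled path. -/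
def ctrlRem (X Y : ℝ → E3) (Y' : ℝ → M3) (η ξ : ℝ) : E3 :=
  Y ξ - Y η - Y' η (X ξ - X η)

/-- `(Y, Y')` is a (closed) path weakly controlled by `X`, i.e. `Y ∈ 𝒟_X`. -/
structure IsControlled (γ : ℝ) (X Y : ℝ → E3) (Y' : ℝ → M3) : Prop where
  closed : Y 0 = Y 1
  cont : ContinuousOn Y (Icc (0:ℝ) 1)
  contD : ContinuousOn Y' (Icc (0:ℝ) 1)
  holderD : HolderOn γ Y'
  rem : RBddOn (2 * γ) (fun η ξ => ctrlRem X Y Y' η ξ)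

/-- The norm `‖Y‖_D = ‖Y'‖_γ + ‖R^Y‖_{2γ} + ‖Y'‖_∞` on `𝒟_X`. -/
def dnorm (γ : ℝ) (X Y : ℝ → E3) (Y' : ℝ → M3) : ℝ :=
  hSemi γ Y' + rnorm (2 * γ) (fun η ξ => ctrlRem X Y Y' η ξ) + sNorm Y'

/-- The norm `‖Y‖_D^* = ‖Y‖_D + ‖Y‖_∞`. -/
def dnormStar (γ : ℝ) (X Y : ℝ → E3) (Y' : ℝ → M3) : ℝ :=
  dnorm γ X Y Y' + sNorm Y

/-- The constant `C_X = 1 + ‖X‖_γ + ‖𝕏²‖_{2γ}`. -/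
def CXconst (γ : ℝ) (X : ℝ → E3) (XX : ℝ → ℝ → M3) : ℝ :=
  1 + hSemi γ X + rnorm (2 * γ) XX

/-- The compensator `P W Qᵀ` (matrix product), i.e. `(P W Qᵀ)^{ij} = P^{ik} W^{kl} Q^{jl}`. -/
def ctrlComp (P Q W : M3) : M3 := P ∘L W ∘L (ContinuousLinearMap.adjoint Q)

/-- Compensated Riemann sum
`Σ_i [ Y_{t_i} ⊗ (Z_{t_{i+1}} - Z_{t_i}) + Y'_{t_i} Z'_{t_i} 𝕏²_{t_{i+1} t_i} ]`
for the rough integral `∫ Y ⊗ dZ` of two weakly controlled paths. -/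
def roughPairRS (XX : ℝ → ℝ → M3) (Y Z : ℝ → E3) (Y' Z' : ℝ → M3)
    {a b : ℝ} (P : Ptn a b) : M3 :=
  ∑ i ∈ Finset.range P.n,
    (oProd (Y (P.t i)) (Z (P.t (i + 1)) - Z (P.t i))
      + ctrlComp (Y' (P.t i)) (Z' (P.t i)) (XX (P.t (i + 1)) (P.t i)))

/-- The contraction `Σ_{k,l} W^{kl} (W'(e_k))(Z'(e_l))`, the compensator of a matrix-valued
controlled integrand `W` (with controlled derivative `W'`) against `dZ`. -/
def comp2 (W' : E3 →L[ℝ] M3) (Z' : M3) (W : M3) : E3 :=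
  ∑ k : Fin 3, ∑ l : Fin 3, ecomp k (W (e3 l)) • (W' (e3 k)) (Z' (e3 l))

/-- Compensated Riemann sum for the rough line integral `∫_0^1 A(x - Z_η) dZ_η` along a path
`Z` weakly controlled by `X`, the integrand `η ↦ A(x - Z_η)` having controlled derivative
`-∇A(x - Z_η) ∘ Z'_η`. -/
def roughVelRS (A : E3 → M3) (XX : ℝ → ℝ → M3) (Z : ℝ → E3) (Z' : ℝ → M3)
    (x : E3) {a b : ℝ} (P : Ptn a b) : E3 :=
  ∑ i ∈ Finset.range P.n,
    (A (x - Z (P.t i)) (Z (P.t (i + 1)) - Z (P.t i))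
      + comp2 (-((fderiv ℝ A (x - Z (P.t i))).comp (Z' (P.t i)))) (Z' (P.t i))
          (XX (P.t (i + 1)) (P.t i)))

/-- `V = V^Z` is the rough velocity field `V^Z(x) = ∫_0^1 A(x - Z_η) dZ_η`, each value being
the limit of compensated Riemann sums. -/
def IsRoughVelocity (A : E3 → M3) (XX : ℝ → ℝ → M3) (Z : ℝ → E3) (Z' : ℝ → M3)
    (V : E3 → E3) : Prop :=
  ∀ x : E3, RSLimit 0 1 (fun P => roughVelRS A XX Z Z' x P) (V x)

/-- Continuity of `t ↦ (Y(t), Y'(t))` from `[0,T]` into `𝒟_X` (with the norm `‖·‖_D^*`). -/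
def ContDT (γ T : ℝ) (X : ℝ → E3) (Y : ℝ → ℝ → E3) (Y' : ℝ → ℝ → M3) : Prop :=
  ∀ t ∈ Icc 0 T, ∀ ε > 0, ∃ δ > 0, ∀ s ∈ Icc 0 T, |s - t| ≤ δ →
    dnormStar γ X (fun ξ => Y s ξ - Y t ξ) (fun ξ => Y' s ξ - Y' t ξ) ≤ ε

/-- Membership in `𝐃_{X,T} = C([0,T], 𝒟_X)`. -/
def MemDT (γ T : ℝ) (X : ℝ → E3) (Y : ℝ → ℝ → E3) (Y' : ℝ → ℝ → M3) : Prop :=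
  (∀ t ∈ Icc 0 T, IsControlled γ X (Y t) (Y' t)) ∧ ContDT γ T X Y Y'

/-- The norm `‖Y‖_{𝐃_{X,T}} = sup_{t ∈ [0,T]} ‖Y(t)‖_D^*`. -/
def dxnorm (γ T : ℝ) (X : ℝ → E3) (Y : ℝ → ℝ → E3) (Y' : ℝ → ℝ → M3) : ℝ :=
  sSup {r | ∃ t ∈ Icc 0 T, r = dnormStar γ X (Y t) (Y' t)}

/-- `(Y, Y')` solves the vortex filament equation on `[0,T]` with initial condition `X`,
the velocity fields being given by rough line integrals over the rough path `(X, 𝕏²)`. -/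
def IsRoughSolution (T : ℝ) (A : E3 → M3) (X : ℝ → E3) (XX : ℝ → ℝ → M3)
    (Y : ℝ → ℝ → E3) (Y' : ℝ → ℝ → M3) : Prop :=
  ∃ v : ℝ → E3 → E3,
    (∀ s ∈ Icc 0 T, IsRoughVelocity A XX (Y s) (Y' s) (v s)) ∧
    (∀ t ∈ Icc 0 T, ∀ ξ ∈ Icc (0:ℝ) 1, Y t ξ = X ξ + ∫ s in (0:ℝ)..t, v s (Y s ξ)) ∧
    (∀ t ∈ Icc 0 T, ∀ ξ ∈ Icc (0:ℝ) 1, Y' t ξ = Fmap' v Y Y' t ξ)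

/-- `YY` is the lift (area process) `𝕐²_{ab} = ∫_a^b (Y_η - Y_a) ⊗ dY_η` of the weakly
controlled path `(Y, Y')`, defined through compensated Riemann sums. -/
def IsLift (XX : ℝ → ℝ → M3) (Y : ℝ → E3) (Y' : ℝ → M3) (YY : ℝ → ℝ → M3) : Prop :=
  ∀ a ∈ Icc (0:ℝ) 1, ∀ b ∈ Icc (0:ℝ) 1, a ≤ b →
    RSLimit a b (fun P => ∑ i ∈ Finset.range P.n,
      (oProd (Y (P.t i) - Y a) (Y (P.t (i + 1)) - Y (P.t i))
        + ctrlComp (Y' (P.t i)) (Y' (P.t i)) (XX (P.t (i + 1)) (P.t i)))) (YY a b)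

/-- `ε`-approximation `ξ ↦ ∫_0^ξ (U_{ρ+ε} - U_ρ)(W_{ρ+ε} - W_ρ) dρ / ε` of the covariation
(the processes being extended by their value at `1`). -/
def covApprox (U W : ℝ → ℝ) (ε ξ : ℝ) : ℝ :=
  ∫ ρ in (0:ℝ)..ξ, (U (min (ρ + ε) 1) - U ρ) * (W (min (ρ + ε) 1) - W ρ) / ε

/-- `C = [U, W]` is the covariation of the processes `U` and `W`: the `ε`-approximations
converge uniformly in probability (ucp) as `ε → 0⁺`. -/
def HasCovariation {Ω : Type*} [MeasurableSpace Ω] (P : Measure Ω)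
    (U W : Ω → ℝ → ℝ) (C : Ω → ℝ → ℝ) : Prop :=
  ∀ δ : ℝ, 0 < δ →
    Tendsto (fun ε : ℝ =>
        P {ω | δ ≤ ⨆ ξ : Icc (0:ℝ) 1, |covApprox (U ω) (W ω) ε ξ.1 - C ω ξ.1|})
      (𝓝[>] (0:ℝ)) (𝓝 (0:ℝ≥0∞))

/-! ### Discrete sewing and Young's inequality -/

/-- The constant of the discrete sewing lemma with exponent `θ > 1`. -/
def sewC (θ : ℝ) : ℝ := 2 / (1 - 2 ^ (1 - θ))

lemma sewC_den_pos {θ : ℝ} (hθ : 1 < θ) : 0 < 1 - (2:ℝ) ^ (1 - θ) := by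
  have : (2:ℝ) ^ (1 - θ) < 1 := Real.rpow_lt_one_of_one_lt_of_neg (by norm_num) (by linarith)
  linarith

lemma sewC_pos {θ : ℝ} (hθ : 1 < θ) : 0 < sewC θ :=
  div_pos two_pos (sewC_den_pos hθ)

/-- Discrete sewing lemma. The interval `[i, j]` is split at the last index `k` before its
midpoint (measured by `t`); the pieces `[i, k]` and `[k + 1, j]` have at most half the length, so
the induction closes because `2 * 2 ^ (-θ) < 1`. -/
lemma sewing_aux {θ K : ℝ} (hθ : 1 < θ) (hK : 0 ≤ K) {t : ℕ → ℝ} (ht : Monotone t)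
    (Ξ : ℕ → ℕ → E3) (hd : ∀ i, Ξ i i = 0)
    (hδ : ∀ i k j, i ≤ k → k ≤ j → ‖Ξ i j - Ξ i k - Ξ k j‖ ≤ K * (t j - t i) ^ θ) :
    ∀ m i j, i ≤ j → j - i ≤ m →
      ‖(∑ k ∈ Finset.Ico i j, Ξ k (k + 1)) - Ξ i j‖ ≤ sewC θ * K * (t j - t i) ^ θ := by
  have hC := sewC_pos hθ
  intro m
  induction m with
  | zero =>
    intro i j hij hm
    obtain rfl : i = j := by omega
    simp [hd, Real.zero_rpow (by linarith : θ ≠ 0)]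
  | succ m ih =>
    intro i j hij hm
    rcases hij.eq_or_lt with rfl | hlt
    · simp [hd, Real.zero_rpow (by linarith : θ ≠ 0)]
    set ω := t j - t i with hω
    have hω0 : 0 ≤ ω := sub_nonneg.2 (ht hij)
    obtain ⟨k, hik, hkj, hk1, hk2⟩ : ∃ k, i ≤ k ∧ k < j ∧ t k - t i ≤ ω / 2 ∧
        t j - t (k + 1) ≤ ω / 2 := by
      classical
      let p : ℕ → Prop := fun k => i ≤ k ∧ t k - t i ≤ ω / 2
      have hpi : p i := ⟨le_rfl, by simp; linarith⟩
      have hs := Nat.findGreatest_spec (P := p) (n := j - 1) (by omega : i ≤ j - 1) hpi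
      have hle := Nat.findGreatest_le (P := p) (j - 1)
      refine ⟨Nat.findGreatest p (j - 1), hs.1, by omega, hs.2, ?_⟩
      set k := Nat.findGreatest p (j - 1) with hk
      by_cases hkj : k + 1 = j
      · rw [hkj]; simp; linarith
      · have hnp : ¬ p (k + 1) :=
          Nat.findGreatest_is_greatest (P := p) (n := j - 1) (by omega) (by omega)
        have : ω / 2 < t (k + 1) - t i := by
          by_contra hcon
          exact hnp ⟨by omega, not_lt.1 hcon⟩
        linarith
    have h1 := ih i k hik (by omega)
    have h2 := ih (k + 1) j (by omega) (by omega)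
    have h3 := hδ i k j hik hkj.le
    have h4 := hδ k (k + 1) j (by omega) (by omega)
    have hsum : ∑ l ∈ Finset.Ico i j, Ξ l (l + 1) = (∑ l ∈ Finset.Ico i k, Ξ l (l + 1))
        + (Ξ k (k + 1) + ∑ l ∈ Finset.Ico (k + 1) j, Ξ l (l + 1)) := by
      rw [← Finset.sum_Ico_consecutive _ hik hkj.le, Finset.sum_eq_sum_Ico_succ_bot hkj]
    have hdec : (∑ l ∈ Finset.Ico i j, Ξ l (l + 1)) - Ξ i j =
        (((∑ l ∈ Finset.Ico i k, Ξ l (l + 1)) - Ξ i k)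
          + ((∑ l ∈ Finset.Ico (k + 1) j, Ξ l (l + 1)) - Ξ (k + 1) j))
        - ((Ξ i j - Ξ i k - Ξ k j) + (Ξ k j - Ξ k (k + 1) - Ξ (k + 1) j)) := by
      rw [hsum]; abel
    have hhalf : (ω / 2) ^ θ = 2 ^ (-θ) * ω ^ θ := by
      rw [Real.div_rpow hω0 (by norm_num), Real.rpow_neg (by norm_num)]
      ring
    have hm1 : (t k - t i) ^ θ ≤ 2 ^ (-θ) * ω ^ θ := by
      rw [← hhalf]
      exact Real.rpow_le_rpow (sub_nonneg.2 (ht hik)) hk1 (by linarith)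
    have hm2 : (t j - t (k + 1)) ^ θ ≤ 2 ^ (-θ) * ω ^ θ := by
      rw [← hhalf]
      exact Real.rpow_le_rpow (sub_nonneg.2 (ht (by omega))) hk2 (by linarith)
    have hm4 : (t j - t k) ^ θ ≤ ω ^ θ :=
      Real.rpow_le_rpow (sub_nonneg.2 (ht hkj.le)) (by have := ht hik; linarith) (by linarith)
    have hCK : 0 ≤ sewC θ * K := by positivity
    have hCeq : sewC θ * (2 * 2 ^ (-θ)) + 2 = sewC θ := by
      have h0 := (sewC_den_pos hθ).ne'
      have he : (2:ℝ) * 2 ^ (-θ) = 2 ^ (1 - θ) := by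
        rw [sub_eq_add_neg, Real.rpow_add (by norm_num), Real.rpow_one]
      rw [he, sewC]
      field_simp
      ring
    rw [hdec]
    calc _ ≤ (sewC θ * K * (t k - t i) ^ θ + sewC θ * K * (t j - t (k + 1)) ^ θ)
          + (K * ω ^ θ + K * (t j - t k) ^ θ) :=
          (norm_sub_le _ _).trans (add_le_add ((norm_add_le _ _).trans (add_le_add h1 h2))
            ((norm_add_le _ _).trans (add_le_add h3 h4)))
      _ ≤ (sewC θ * K * (2 ^ (-θ) * ω ^ θ) + sewC θ * K * (2 ^ (-θ) * ω ^ θ))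
          + (K * ω ^ θ + K * ω ^ θ) := by gcongr
      _ = (sewC θ * (2 * 2 ^ (-θ)) + 2) * K * ω ^ θ := by ring
      _ = _ := by rw [hCeq]

/-- `C` is a `γ`-Hölder constant of `X` on `[0,1]`. -/
def HB {F : Type*} [NormedAddCommGroup F] (γ C : ℝ) (X : ℝ → F) : Prop :=
  ∀ s ∈ Icc (0:ℝ) 1, ∀ t ∈ Icc (0:ℝ) 1, ‖X s - X t‖ ≤ C * |s - t| ^ γ

lemma HB.nonneg {F : Type*} [NormedAddCommGroup F] {γ C : ℝ} {X : ℝ → F} (h : HB γ C X) :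
    0 ≤ C := by
  have := (norm_nonneg _).trans (h 0 (by simp) 1 (by simp))
  simpa using this

/-- Young's inequality for Riemann–Stieltjes sums along a monotone sequence of points. -/
lemma young_seq {γ : ℝ} (hγ : 1 / 2 < γ) {f : ℝ → M3} {Z : ℝ → E3} {F H : ℝ}
    (hf : HB γ F f) (hZ : HB γ H Z) {u : ℕ → ℝ} (hu : Monotone u)
    (hu01 : ∀ i, u i ∈ Icc (0:ℝ) 1) (n : ℕ) :
    ‖(∑ i ∈ Finset.range n, f (u i) (Z (u (i + 1)) - Z (u i))) - f (u 0) (Z (u n) - Z (u 0))‖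
      ≤ sewC (2 * γ) * (F * H) * (u n - u 0) ^ (2 * γ) := by
  have hF := hf.nonneg
  have hH := hZ.nonneg
  rw [Finset.range_eq_Ico]
  refine sewing_aux (θ := 2 * γ) (K := F * H) (by linarith) (by positivity) hu
    (fun i j => f (u i) (Z (u j) - Z (u i))) (by simp) ?_ n 0 n (by omega) (by omega)
  intro i k j hik hkj
  have he : f (u i) (Z (u j) - Z (u i)) - f (u i) (Z (u k) - Z (u i))
      - f (u k) (Z (u j) - Z (u k)) = (f (u i) - f (u k)) (Z (u j) - Z (u k)) := by
    simp only [map_sub, _root_.sub_apply]; abel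
  have h1 := hu hik
  have h2 := hu hkj
  rw [he]
  calc _ ≤ ‖f (u i) - f (u k)‖ * ‖Z (u j) - Z (u k)‖ := ContinuousLinearMap.le_opNorm _ _
    _ ≤ (F * |u i - u k| ^ γ) * (H * |u j - u k| ^ γ) := by
        gcongr
        · exact hf _ (hu01 _) _ (hu01 _)
        · exact hZ _ (hu01 _) _ (hu01 _)
    _ ≤ (F * (u j - u i) ^ γ) * (H * (u j - u i) ^ γ) := by
        have h3 : 0 ≤ (u j - u i) ^ γ := Real.rpow_nonneg (by linarith) _
        gcongr
        · rw [abs_le]; constructor <;> linarith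
        · rw [abs_le]; constructor <;> linarith
    _ = F * H * (u j - u i) ^ (2 * γ) := by
        rw [two_mul, Real.rpow_add_of_nonneg (by linarith) (by linarith) (by linarith)]; ring

/-- The points of a partition, extended by the right endpoint. -/
def Ptn.ext {a b : ℝ} (P : Ptn a b) (i : ℕ) : ℝ := P.t (min i P.n)

lemma Ptn.ext_mono {a b : ℝ} (P : Ptn a b) : Monotone P.ext := by
  refine monotone_nat_of_le_succ fun i => ?_
  unfold Ptn.ext
  rcases lt_or_ge i P.n with h | h
  · rw [min_eq_left h.le, min_eq_left (by omega)]; exact P.mono i h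
  · rw [min_eq_right h, min_eq_right (by omega)]

lemma Ptn.ext_of_le {a b : ℝ} (P : Ptn a b) {i : ℕ} (h : i ≤ P.n) : P.ext i = P.t i := by
  unfold Ptn.ext; rw [min_eq_left h]

lemma Ptn.ext_mem {a b : ℝ} (P : Ptn a b) (i : ℕ) : P.ext i ∈ Icc a b := by
  constructor
  · calc a = P.ext 0 := by rw [P.ext_of_le (Nat.zero_le _), P.first]
      _ ≤ _ := P.ext_mono (Nat.zero_le _)
  · calc P.ext i ≤ P.ext (max i P.n) := P.ext_mono (le_max_left _ _)
      _ = b := by unfold Ptn.ext; rw [min_eq_right (le_max_right _ _), P.last]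

/-- Riemann–Stieltjes sum of `∫_0^1 f dZ`. -/
def rsSum (f : ℝ → M3) (Z : ℝ → E3) (P : Ptn 0 1) : E3 :=
  ∑ i ∈ Finset.range P.n, f (P.t i) (Z (P.t (i + 1)) - Z (P.t i))

lemma rsSum_eq_ext (f : ℝ → M3) (Z : ℝ → E3) (P : Ptn 0 1) :
    rsSum f Z P = ∑ i ∈ Finset.range P.n, f (P.ext i) (Z (P.ext (i + 1)) - Z (P.ext i)) := by
  refine Finset.sum_congr rfl fun i hi => ?_
  have := Finset.mem_range.1 hi
  rw [P.ext_of_le this.le, P.ext_of_le (by omega)]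

/-- For a closed curve the Riemann–Stieltjes sums only see the Hölder constant of the integrand. -/
lemma rsSum_le {γ : ℝ} (hγ : 1 / 2 < γ) {f : ℝ → M3} {Z : ℝ → E3} {F H : ℝ}
    (hf : HB γ F f) (hZ : HB γ H Z) (hc : Z 0 = Z 1) (P : Ptn 0 1) :
    ‖rsSum f Z P‖ ≤ sewC (2 * γ) * (F * H) := by
  have h := young_seq hγ hf hZ P.ext_mono P.ext_mem P.n
  rw [← rsSum_eq_ext, P.ext_of_le le_rfl, P.ext_of_le (Nat.zero_le _), P.first, P.last, hc] at h
  simpa using h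

/-! ### Existence of the Young integral -/

/-- The Riemann–Stieltjes sum of `∫_0^t f dZ` along the uniform grid of step `1 / n`, the grid
points being stopped at `t`. -/
def unifSum (f : ℝ → M3) (Z : ℝ → E3) (n : ℕ) (t : ℝ) : E3 :=
  ∑ i ∈ Finset.range n, f (i / n) (Z (min t ((i + 1 : ℕ) / n)) - Z (min t (i / n)))

lemma unifSum_zero (f : ℝ → M3) (Z : ℝ → E3) (n : ℕ) : unifSum f Z n 0 = 0 := by
  refine Finset.sum_eq_zero fun i _ => ?_
  rw [min_eq_left (by positivity), min_eq_left (by positivity)]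
  simp

/-- The discrepancy allowed in `unifSum_incr`; it vanishes as `n → ∞` because `2 * γ > 1`. -/
def unifErr (γ F H : ℝ) (n : ℕ) : ℝ := n * ((F * (1 / n) ^ γ) * (H * (1 / n) ^ γ))

lemma unifErr_tendsto {γ : ℝ} (hγ : 1 / 2 < γ) (F H : ℝ) :
    Tendsto (unifErr γ F H) atTop (𝓝 0) := by
  have h1 : Tendsto (fun n : ℕ => F * H * (n:ℝ) ^ (-(2 * γ - 1))) atTop (𝓝 (F * H * 0)) :=
    ((tendsto_rpow_neg_atTop (by linarith : 0 < 2 * γ - 1)).comp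
      tendsto_natCast_atTop_atTop).const_mul _
  rw [mul_zero] at h1
  refine h1.congr' ?_
  filter_upwards [eventually_gt_atTop 0] with n hn
  have hn' : (0:ℝ) < n := by exact_mod_cast hn
  have : (n:ℝ) ^ (-(2 * γ - 1)) = n * ((n:ℝ) ^ (-γ) * (n:ℝ) ^ (-γ)) := by
    rw [← Real.rpow_add hn', ← Real.rpow_one_add' hn'.le (by linarith)]
    congr 1; ring
  rw [unifErr, one_div, Real.inv_rpow hn'.le, ← Real.rpow_neg hn'.le, this]
  ring

/-- Over `[s, t]` the uniform sum increases by `f s (Z t - Z s)`, up to the Young error and the error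
caused by evaluating `f` at a grid point outside `[s, t]`. -/
lemma unifSum_incr {γ : ℝ} (hγ : 1 / 2 < γ) {f : ℝ → M3} {Z : ℝ → E3} {F H : ℝ}
    (hf : HB γ F f) (hZ : HB γ H Z) {s t : ℝ} (hs : 0 ≤ s) (hst : s ≤ t) (ht : t ≤ 1)
    {n : ℕ} (hn : 0 < n) :
    ‖unifSum f Z n t - unifSum f Z n s - f s (Z t - Z s)‖
      ≤ sewC (2 * γ) * (F * H) * (t - s) ^ (2 * γ) + unifErr γ F H n := by
  have hF := hf.nonneg
  have hH := hZ.nonneg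
  have hn' : (0:ℝ) < n := by exact_mod_cast hn
  -- The grid clamped to `[s, t]`.
  set u : ℕ → ℝ := fun i => max s (min t (i / n)) with hu
  have humono : Monotone u := by
    intro i j hij
    have : (i:ℝ) / n ≤ j / n := by gcongr
    exact max_le_max le_rfl (min_le_min le_rfl this)
  have hu01 : ∀ i, u i ∈ Icc (0:ℝ) 1 := fun i =>
    ⟨hs.trans (le_max_left _ _), max_le (hst.trans ht) ((min_le_left _ _).trans ht)⟩
  have hu0 : u 0 = s := by
    simp only [hu, Nat.cast_zero, zero_div]
    rw [min_eq_right (hs.trans hst), max_eq_left hs]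
  have hun : u n = t := by
    simp only [hu]
    rw [div_self hn'.ne', min_eq_left ht, max_eq_right hst]
  have hmain := young_seq hγ hf hZ humono hu01 n
  rw [hu0, hun] at hmain
  have hcl : ∀ w : ℝ, Z (min t w) - Z (min s w) = Z (max s (min t w)) - Z s := by
    intro w
    rcases le_total w s with h | h
    · rw [min_eq_right (h.trans hst), min_eq_right h, max_eq_left h]; simp
    · rw [min_eq_left h, max_eq_right (le_min hst h)]
  have hdiff : unifSum f Z n t - unifSum f Z n s =
      ∑ i ∈ Finset.range n, f (i / n) (Z (u (i + 1)) - Z (u i)) := by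
    unfold unifSum
    rw [← Finset.sum_sub_distrib]
    refine Finset.sum_congr rfl fun i _ => ?_
    rw [← map_sub]
    congr 1
    have h1 := hcl ((i + 1 : ℕ) / n)
    have h2 := hcl (i / n)
    calc _ = (Z (min t ((i + 1 : ℕ) / n)) - Z (min s ((i + 1 : ℕ) / n)))
          - (Z (min t (i / n)) - Z (min s (i / n))) := by abel
      _ = _ := by rw [h1, h2]; simp only [hu]; abel
  have herr : ‖(∑ i ∈ Finset.range n, f (i / n) (Z (u (i + 1)) - Z (u i)))
      - ∑ i ∈ Finset.range n, f (u i) (Z (u (i + 1)) - Z (u i))‖ ≤ unifErr γ F H n := by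
    rw [← Finset.sum_sub_distrib]
    have : unifErr γ F H n =
        ∑ i ∈ Finset.range n, (F * (1 / n : ℝ) ^ γ) * (H * (1 / n : ℝ) ^ γ) := by
      simp [unifErr]
    rw [this]
    refine norm_sum_le_of_le _ fun i hi => ?_
    have hi' : i < n := Finset.mem_range.1 hi
    have hsucc : ((i + 1 : ℕ) : ℝ) / n = i / n + 1 / n := by push_cast; ring
    have h1n : (0:ℝ) < 1 / n := by positivity
    have hin : (0:ℝ) ≤ i / n := by positivity
    have hin1 : (i:ℝ) / n ≤ 1 := by
      rw [div_le_one hn']; exact_mod_cast hi'.le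
    by_cases he : u (i + 1) = u i
    · rw [he]
      simp only [sub_self, map_zero, norm_zero]
      positivity
    have hui : u i = max s (min t (i / n)) := rfl
    have hui1 : u (i + 1) = max s (min t (i / n + 1 / n)) := by
      simp only [hu]; rw [hsucc]
    have hb1 : |(i:ℝ) / n - u i| ≤ 1 / n := by
      rw [hui1, hui] at he
      rw [hui, abs_le]
      grind
    have hb2 : |u (i + 1) - u i| ≤ 1 / n := by
      rw [hui1, hui, abs_le]
      grind
    rw [← _root_.sub_apply]
    calc _ ≤ ‖f (i / n) - f (u i)‖ * ‖Z (u (i + 1)) - Z (u i)‖ :=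
          ContinuousLinearMap.le_opNorm _ _
      _ ≤ (F * |(i:ℝ) / n - u i| ^ γ) * (H * |u (i + 1) - u i| ^ γ) := by
          gcongr
          · exact hf _ ⟨hin, hin1⟩ _ (hu01 _)
          · exact hZ _ (hu01 _) _ (hu01 _)
      _ ≤ _ := by gcongr
  rw [hdiff]
  calc _ = ‖((∑ i ∈ Finset.range n, f (u i) (Z (u (i + 1)) - Z (u i))) - f s (Z t - Z s))
        + ((∑ i ∈ Finset.range n, f (i / n) (Z (u (i + 1)) - Z (u i)))
          - ∑ i ∈ Finset.range n, f (u i) (Z (u (i + 1)) - Z (u i)))‖ := by congr 1; abel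
    _ ≤ _ := (norm_add_le _ _).trans (add_le_add hmain herr)

/-- Existence of the Young integral: a cluster point of the uniform Riemann–Stieltjes sums is the
limit along all partitions. -/
lemma young_exists {γ : ℝ} (hγ : 1 / 2 < γ) {f : ℝ → M3} {Z : ℝ → E3} {F H : ℝ}
    (hf : HB γ F f) (hZ : HB γ H Z) : ∃ I, RSLimit 0 1 (rsSum f Z) I := by
  have hF := hf.nonneg
  have hH := hZ.nonneg
  have hC := sewC_pos (by linarith : 1 < 2 * γ)
  have herr := unifErr_tendsto hγ F H
  obtain ⟨B, hB⟩ := herr.bddAbove_range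
  obtain ⟨I, -, φ, hφ, hI⟩ : ∃ I ∈ closure (Metric.closedBall (f 0 (Z 1 - Z 0))
      (sewC (2 * γ) * (F * H) + B)), ∃ φ : ℕ → ℕ, StrictMono φ ∧
      Tendsto ((fun n => unifSum f Z (n + 1) 1) ∘ φ) atTop (𝓝 I) := by
    refine tendsto_subseq_of_bounded Metric.isBounded_closedBall fun n => ?_
    have h := unifSum_incr hγ hf hZ le_rfl zero_le_one le_rfl (Nat.succ_pos n)
    rw [unifSum_zero] at h
    rw [Metric.mem_closedBall, dist_eq_norm]
    have hb : unifErr γ F H (n + 1) ≤ B := hB ⟨_, rfl⟩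
    simp only [sub_zero, Real.one_rpow, mul_one, Nat.succ_eq_add_one] at h
    exact h.trans (by linarith)
  refine ⟨I, fun ε hε => ?_⟩
  have hlim : Tendsto (fun δ : ℝ => sewC (2 * γ) * (F * H) * δ ^ (2 * γ - 1)) (𝓝[>] 0) (𝓝 0) := by
    have h1 : ContinuousAt (fun δ : ℝ => sewC (2 * γ) * (F * H) * δ ^ (2 * γ - 1)) 0 :=
      (Real.continuousAt_rpow_const _ _ (Or.inr (by linarith))).const_mul _
    have h2 := h1.tendsto
    rw [Real.zero_rpow (by linarith), mul_zero] at h2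
    exact h2.mono_left nhdsWithin_le_nhds
  obtain ⟨δ, hδε, hδ⟩ := ((hlim.eventually_lt_const hε).and self_mem_nhdsWithin).exists
  have hδ0 : 0 < δ := hδ
  refine ⟨δ, hδ, fun P hP => le_trans ?_ hδε.le⟩
  have key : ∀ n : ℕ, ‖rsSum f Z P - unifSum f Z (n + 1) 1‖ ≤
      sewC (2 * γ) * (F * H) * δ ^ (2 * γ - 1) + P.n * unifErr γ F H (n + 1) := by
    intro n
    have htel : unifSum f Z (n + 1) 1 = ∑ i ∈ Finset.range P.n,
        (unifSum f Z (n + 1) (P.ext (i + 1)) - unifSum f Z (n + 1) (P.ext i)) := by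
      rw [Finset.sum_range_sub (fun i => unifSum f Z (n + 1) (P.ext i)),
        P.ext_of_le le_rfl, P.ext_of_le (Nat.zero_le _), P.first, P.last, unifSum_zero, sub_zero]
    have hlen : ∑ i ∈ Finset.range P.n, (P.ext (i + 1) - P.ext i) = 1 := by
      rw [Finset.sum_range_sub (fun i => P.ext i),
        P.ext_of_le le_rfl, P.ext_of_le (Nat.zero_le _), P.first, P.last, sub_zero]
    have hbd : sewC (2 * γ) * (F * H) * δ ^ (2 * γ - 1) + P.n * unifErr γ F H (n + 1) =
        ∑ i ∈ Finset.range P.n, (sewC (2 * γ) * (F * H) *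
          (δ ^ (2 * γ - 1) * (P.ext (i + 1) - P.ext i)) + unifErr γ F H (n + 1)) := by
      rw [Finset.sum_add_distrib, ← Finset.mul_sum, ← Finset.mul_sum, hlen]
      simp
    rw [rsSum_eq_ext, htel, ← Finset.sum_sub_distrib, hbd]
    refine norm_sum_le_of_le _ fun i hi => ?_
    have hi' : i < P.n := Finset.mem_range.1 hi
    rw [norm_sub_rev]
    have hm := P.ext_mono (Nat.le_succ i)
    refine (unifSum_incr hγ hf hZ (P.ext_mem i).1 hm (P.ext_mem _).2
      (Nat.succ_pos n)).trans ?_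
    have hx : 0 ≤ P.ext (i + 1) - P.ext i := sub_nonneg.2 hm
    have hxδ : P.ext (i + 1) - P.ext i ≤ δ := by
      rw [P.ext_of_le hi'.le, P.ext_of_le (by omega)]; exact hP i hi'
    have hpow : (P.ext (i + 1) - P.ext i) ^ (2 * γ) ≤
        δ ^ (2 * γ - 1) * (P.ext (i + 1) - P.ext i) := by
      calc _ = (P.ext (i + 1) - P.ext i) ^ (2 * γ - 1) * (P.ext (i + 1) - P.ext i) := by
            rw [← Real.rpow_add_one' hx (by linarith)]; congr 1; ring
        _ ≤ _ := by
            gcongr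
            linarith
    simp only [Nat.succ_eq_add_one]
    gcongr
  have hL : Tendsto (fun k => ‖rsSum f Z P - unifSum f Z (φ k + 1) 1‖) atTop
      (𝓝 ‖rsSum f Z P - I‖) := (tendsto_const_nhds.sub hI).norm
  have hR : Tendsto (fun k => sewC (2 * γ) * (F * H) * δ ^ (2 * γ - 1)
      + P.n * unifErr γ F H (φ k + 1)) atTop
      (𝓝 (sewC (2 * γ) * (F * H) * δ ^ (2 * γ - 1) + P.n * 0)) :=
    tendsto_const_nhds.add
      (((herr.comp (tendsto_add_atTop_nat 1)).comp hφ.tendsto_atTop).const_mul _)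
  have := le_of_tendsto_of_tendsto' hL hR fun k => key (φ k)
  simpa using this

lemma exists_ptn_mesh {δ : ℝ} (hδ : 0 < δ) : ∃ P : Ptn 0 1, P.MeshLE δ := by
  obtain ⟨n, hn⟩ := exists_nat_one_div_lt hδ
  have hn0 : ((n:ℝ) + 1) ≠ 0 := by positivity
  refine ⟨⟨n + 1, fun i => i / (n + 1), by simp, by push_cast; field_simp, fun i _ => by
    gcongr; simp⟩, fun i _ => ?_⟩
  simp only
  push_cast
  rw [← sub_div, add_sub_cancel_left]
  exact hn.le

lemma RSLimit.sub {S S' : Ptn 0 1 → E3} {I I' : E3} (h : RSLimit 0 1 S I)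
    (h' : RSLimit 0 1 S' I') : RSLimit 0 1 (fun P => S P - S' P) (I - I') := by
  intro ε hε
  obtain ⟨δ, hδ, hS⟩ := h (ε / 2) (by linarith)
  obtain ⟨δ', hδ', hS'⟩ := h' (ε / 2) (by linarith)
  refine ⟨min δ δ', lt_min hδ hδ', fun P hP => ?_⟩
  have h1 := hS P fun i hi => (hP i hi).trans (min_le_left _ _)
  have h2 := hS' P fun i hi => (hP i hi).trans (min_le_right _ _)
  have : S P - S' P - (I - I') = (S P - I) - (S' P - I') := by abel
  rw [this]
  exact (norm_sub_le _ _).trans (by linarith)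

lemma RSLimit.norm_le {S : Ptn 0 1 → E3} {I : E3} (h : RSLimit 0 1 S I) {B : ℝ}
    (hB : ∀ P, ‖S P‖ ≤ B) : ‖I‖ ≤ B := by
  refine le_of_forall_pos_le_add fun ε hε => ?_
  obtain ⟨δ, hδ, hS⟩ := h ε hε
  obtain ⟨P, hP⟩ := exists_ptn_mesh hδ
  have h1 := hS P hP
  have h2 := hB P
  have h3 := norm_le_insert' I (S P)
  rw [norm_sub_rev] at h3
  linarith

lemma RSLimit.unique {S : Ptn 0 1 → E3} {I I' : E3} (h : RSLimit 0 1 S I)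
    (h' : RSLimit 0 1 S I') : I = I' := by
  have := (h.sub h').norm_le (B := 0) (by simp)
  exact sub_eq_zero.1 (norm_le_zero_iff.1 this)

/-! ### Finite differences of the kernel -/

lemma diff_one {G : Type*} [NormedAddCommGroup G] [NormedSpace ℝ G] {B : E3 → G}
    (hB : Differentiable ℝ B) {L : ℝ} (hL : ∀ x, ‖fderiv ℝ B x‖ ≤ L) (x y : E3) :
    ‖B x - B y‖ ≤ L * ‖x - y‖ :=
  convex_univ.norm_image_sub_le_of_norm_fderiv_le (fun z _ => hB z) (fun z _ => hL z)
    (mem_univ y) (mem_univ x)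

lemma differentiable_shift {G : Type*} [NormedAddCommGroup G] [NormedSpace ℝ G] {B : E3 → G}
    (hB : Differentiable ℝ B) (v : E3) : Differentiable ℝ (fun z => B (z + v) - B z) := by
  fun_prop

lemma fderiv_shift {G : Type*} [NormedAddCommGroup G] [NormedSpace ℝ G] {B : E3 → G}
    (hB : Differentiable ℝ B) (v x : E3) :
    fderiv ℝ (fun z => B (z + v) - B z) x = fderiv ℝ B (x + v) - fderiv ℝ B x := by
  rw [fderiv_fun_sub (by fun_prop) (by fun_prop), fderiv_comp_add_right]

lemma diff_two {G : Type*} [NormedAddCommGroup G] [NormedSpace ℝ G] {B : E3 → G}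
    (hB : Differentiable ℝ B) (hB' : Differentiable ℝ (fderiv ℝ B)) {L : ℝ}
    (hL : ∀ x, ‖fderiv ℝ (fderiv ℝ B) x‖ ≤ L) (x y v : E3) :
    ‖(B (x + v) - B x) - (B (y + v) - B y)‖ ≤ L * ‖v‖ * ‖x - y‖ := by
  refine diff_one (B := fun z => B (z + v) - B z) (differentiable_shift hB v) (fun z => ?_) x y
  rw [fderiv_shift hB]
  simpa using diff_one hB' hL (z + v) z

/-- Bounds on the first, second and third order finite differences of `A`. -/
structure FDBounds {G : Type*} [NormedAddCommGroup G] (A : E3 → G) (L₁ L₂ L₃ : ℝ) : Prop where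
  nn₁ : 0 ≤ L₁
  nn₂ : 0 ≤ L₂
  nn₃ : 0 ≤ L₃
  one : ∀ x y, ‖A x - A y‖ ≤ L₁ * ‖x - y‖
  two : ∀ x y v, ‖(A (x + v) - A x) - (A (y + v) - A y)‖ ≤ L₂ * ‖v‖ * ‖x - y‖
  three : ∀ x y u v, ‖((A (x + u + v) - A (x + u)) - (A (x + v) - A x))
    - ((A (y + u + v) - A (y + u)) - (A (y + v) - A y))‖ ≤ L₃ * ‖u‖ * ‖v‖ * ‖x - y‖

lemma tnorm_nonneg {G : Type*} [NormedAddCommGroup G] [NormedSpace ℝ G] (j : ℕ) (A : E3 → G) :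
    0 ≤ tnorm j A :=
  Real.sSup_nonneg (by rintro _ ⟨x, rfl⟩; exact norm_nonneg _)

set_option synthInstance.maxHeartbeats 200000 in
set_option maxSynthPendingDepth 10 in
lemma NablaBdd.fdBounds {G : Type*} [NormedAddCommGroup G] [NormedSpace ℝ G] {A : E3 → G}
    (hA : NablaBdd 1 2 A) : FDBounds A (tnorm 1 A) (tnorm 2 A) (tnorm 3 A) := by
  obtain ⟨hc, hb⟩ := hA
  have hc3 : ContDiff ℝ 3 A := by
    have : (((1:ℕ) : WithTop ℕ∞) + ((2:ℕ) : WithTop ℕ∞)) = 3 := by norm_num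
    rwa [this] at hc
  have hc2 : ContDiff ℝ 2 (fderiv ℝ A) := hc3.fderiv_right (by norm_num)
  have hc1 : ContDiff ℝ 1 (fderiv ℝ (fderiv ℝ A)) := hc2.fderiv_right (by norm_num)
  have d0 : Differentiable ℝ A := hc3.differentiable (by norm_num)
  have d1 : Differentiable ℝ (fderiv ℝ A) := hc2.differentiable (by norm_num)
  have d2 : Differentiable ℝ (fderiv ℝ (fderiv ℝ A)) := hc1.differentiable (by norm_num)
  have n1 : ∀ x, ‖fderiv ℝ A x‖ ≤ tnorm 1 A := fun x => by
    rw [← norm_iteratedFDeriv_one]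
    exact le_csSup (hb 1 le_rfl (by norm_num)) ⟨x, rfl⟩
  have n2 : ∀ x, ‖fderiv ℝ (fderiv ℝ A) x‖ ≤ tnorm 2 A := fun x => by
    rw [← norm_iteratedFDeriv_one, norm_iteratedFDeriv_fderiv]
    exact le_csSup (hb 2 (by norm_num) (by norm_num)) ⟨x, rfl⟩
  have n3 : ∀ x, ‖fderiv ℝ (fderiv ℝ (fderiv ℝ A)) x‖ ≤ tnorm 3 A := fun x => by
    rw [← norm_iteratedFDeriv_one, norm_iteratedFDeriv_fderiv, norm_iteratedFDeriv_fderiv]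
    exact le_csSup (hb 3 (by norm_num) (by norm_num)) ⟨x, rfl⟩
  refine ⟨tnorm_nonneg _ _, tnorm_nonneg _ _, tnorm_nonneg _ _, diff_one d0 n1,
    diff_two d0 d1 n2, fun x y u v => ?_⟩
  have ds := differentiable_shift d0 v
  refine diff_one (B := fun z => (A (z + u + v) - A (z + u)) - (A (z + v) - A z))
    (differentiable_shift ds u) (fun z => ?_) x y
  rw [fderiv_shift ds u, fderiv_shift d0, fderiv_shift d0]
  have := diff_two d1 d2 n3 (z + u) z v
  rw [add_sub_cancel_left] at this
  calc _ ≤ _ := this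
    _ = _ := by ring

/-! ### Estimates on the velocity field -/

/-- `I` is the value at `x` of the Young velocity field of the curve `Z`. -/
def IsVel (A : E3 → M3) (Z : ℝ → E3) (x I : E3) : Prop :=
  RSLimit 0 1 (rsSum (fun ρ => A (x - Z ρ)) Z) I

lemma rsSum_sub_left (f g : ℝ → M3) (Z : ℝ → E3) (P : Ptn 0 1) :
    rsSum f Z P - rsSum g Z P = rsSum (fun ρ => f ρ - g ρ) Z P := by
  simp only [rsSum, ← Finset.sum_sub_distrib, _root_.sub_apply]

lemma rsSum_sub_sub (f g : ℝ → M3) (Y Z : ℝ → E3) (P : Ptn 0 1) :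
    rsSum f Y P - rsSum g Z P =
      rsSum (fun ρ => f ρ - g ρ) Y P + rsSum g (fun ρ => Y ρ - Z ρ) P := by
  simp only [rsSum, ← Finset.sum_sub_distrib, ← Finset.sum_add_distrib]
  refine Finset.sum_congr rfl fun i _ => ?_
  simp only [map_sub, _root_.sub_apply]
  abel

section
variable {γ : ℝ} {A : E3 → M3} {L₁ L₂ L₃ R D : ℝ} {Y Z : ℝ → E3}

lemma HB_kernel (hA : FDBounds A L₁ L₂ L₃) (hY : HB γ R Y) (x : E3) :
    HB γ (L₁ * R) (fun ρ => A (x - Y ρ)) := by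
  intro s hs t ht
  have h0 := hA.nn₁
  calc _ ≤ L₁ * ‖(x - Y s) - (x - Y t)‖ := hA.one _ _
    _ = L₁ * ‖Y s - Y t‖ := by rw [sub_sub_sub_cancel_left, norm_sub_rev]
    _ ≤ L₁ * (R * |s - t| ^ γ) := by gcongr; exact hY s hs t ht
    _ = _ := by ring

lemma HB_kernel_sub (hA : FDBounds A L₁ L₂ L₃) (hY : HB γ R Y) (x y : E3) :
    HB γ (L₂ * ‖x - y‖ * R) (fun ρ => A (x - Y ρ) - A (y - Y ρ)) := by
  intro s hs t ht
  beta_reduce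
  have h0 := hA.nn₂
  have h := hA.two (x - Y t) (y - Y t) (Y t - Y s)
  rw [sub_add_sub_cancel, sub_add_sub_cancel, sub_sub_sub_cancel_right] at h
  calc _ = ‖(A (x - Y s) - A (x - Y t)) - (A (y - Y s) - A (y - Y t))‖ := by congr 1; abel
    _ ≤ _ := h
    _ ≤ L₂ * (R * |s - t| ^ γ) * ‖x - y‖ := by
        gcongr; rw [norm_sub_rev]; exact hY s hs t ht
    _ = _ := by ring

lemma vel_bound (hγ : 1 / 2 < γ) (hA : FDBounds A L₁ L₂ L₃) (hY : HB γ R Y) (hc : Y 0 = Y 1)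
    {x I : E3} (hI : IsVel A Y x I) : ‖I‖ ≤ sewC (2 * γ) * (L₁ * R * R) :=
  RSLimit.norm_le hI fun P => rsSum_le hγ (HB_kernel hA hY x) hY hc P

lemma vel_lip (hγ : 1 / 2 < γ) (hA : FDBounds A L₁ L₂ L₃) (hY : HB γ R Y) (hc : Y 0 = Y 1)
    {x y I J : E3} (hI : IsVel A Y x I) (hJ : IsVel A Y y J) :
    ‖I - J‖ ≤ sewC (2 * γ) * (L₂ * ‖x - y‖ * R * R) :=
  (RSLimit.sub hI hJ).norm_le fun P => by
    rw [rsSum_sub_left]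
    exact rsSum_le hγ (HB_kernel_sub hA hY x y) hY hc P

lemma vel_exists (hγ : 1 / 2 < γ) (hA : FDBounds A L₁ L₂ L₃) (hY : HB γ R Y) (x : E3) :
    ∃ I, IsVel A Y x I :=
  young_exists hγ (HB_kernel hA hY x) hY

/-- `Y` and `Z` are closed curves with Hölder constant `R`, at distance at most `D`. -/
structure Close (γ R D : ℝ) (Y Z : ℝ → E3) : Prop where
  hY : HB γ R Y
  hZ : HB γ R Z
  cY : Y 0 = Y 1
  cZ : Z 0 = Z 1
  sup : ∀ s ∈ Icc (0:ℝ) 1, ‖Y s - Z s‖ ≤ D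
  hol : HB γ D (fun s => Y s - Z s)

/-- Sup-norm part of the Lipschitz estimate for `Y ↦ V^Y(Y)`. -/
lemma vel_diff_sup (hγ : 1 / 2 < γ) (hA : FDBounds A L₁ L₂ L₃) (h : Close γ R D Y Z)
    {ξ : ℝ} (hξ : ξ ∈ Icc (0:ℝ) 1) {I J : E3} (hI : IsVel A Y (Y ξ) I) (hJ : IsVel A Z (Z ξ) J) :
    ‖I - J‖ ≤ sewC (2 * γ) * ((L₂ * R * (2 * D) + L₁ * D) * R)
      + sewC (2 * γ) * (L₁ * R * D) := by
  refine (RSLimit.sub hI hJ).norm_le fun P => ?_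
  rw [rsSum_sub_sub]
  refine (norm_add_le _ _).trans (add_le_add
    (rsSum_le hγ ?_ h.hY h.cY P)
    (rsSum_le hγ (HB_kernel hA h.hZ (Z ξ)) h.hol (by simp only [h.cY, h.cZ]) P))
  intro s hs t ht
  beta_reduce
  have h1 := hA.nn₁
  have h2 := hA.nn₂
  have hR := h.hY.nonneg
  have hD := h.hol.nonneg
  set a := Y ξ - Y t with ha
  set a' := Z ξ - Z t with ha'
  set v := Y t - Y s with hv
  set v' := Z t - Z s with hv'
  have hav : Y ξ - Y s = a + v := by simp only [ha, hv]; abel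
  have hav' : Z ξ - Z s = a' + v' := by simp only [ha', hv']; abel
  have hvR : ‖v‖ ≤ R * |s - t| ^ γ := by
    rw [hv, norm_sub_rev]; exact h.hY s hs t ht
  have hvv : ‖v - v'‖ ≤ D * |s - t| ^ γ := by
    have e : v - v' = (Y t - Z t) - (Y s - Z s) := by simp only [hv, hv']; abel
    rw [e, norm_sub_rev]
    exact h.hol s hs t ht
  have haa : ‖a - a'‖ ≤ 2 * D := by
    have e : a - a' = (Y ξ - Z ξ) - (Y t - Z t) := by simp only [ha, ha']; abel
    rw [e, two_mul]
    exact (norm_sub_le _ _).trans (add_le_add (h.sup ξ hξ) (h.sup t ht))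
  have hone := hA.one (a' + v) (a' + v')
  rw [add_sub_add_left_eq_sub] at hone
  rw [hav, hav']
  calc _ = ‖((A (a + v) - A a) - (A (a' + v) - A a')) + (A (a' + v) - A (a' + v'))‖ := by
        congr 1; abel
    _ ≤ L₂ * ‖v‖ * ‖a - a'‖ + L₁ * ‖v - v'‖ :=
        (norm_add_le _ _).trans (add_le_add (hA.two _ _ _) hone)
    _ ≤ L₂ * (R * |s - t| ^ γ) * (2 * D) + L₁ * (D * |s - t| ^ γ) := by gcongr
    _ = _ := by ring

/-- Hölder part of the Lipschitz estimate for `Y ↦ V^Y(Y)`. The integrand of the difference is a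
second order difference of `A` in the parameters `ξ, η` and `s, t`, compared along `Y` and `Z`. -/
lemma vel_diff_hol (hγ : 1 / 2 < γ) (hA : FDBounds A L₁ L₂ L₃) (h : Close γ R D Y Z)
    {ξ η : ℝ} (hξ : ξ ∈ Icc (0:ℝ) 1) (hη : η ∈ Icc (0:ℝ) 1) {I J I' J' : E3}
    (hI : IsVel A Y (Y ξ) I) (hJ : IsVel A Z (Z ξ) J)
    (hI' : IsVel A Y (Y η) I') (hJ' : IsVel A Z (Z η) J') :
    ‖(I - I') - (J - J')‖ ≤ (sewC (2 * γ) * ((L₃ * R * R * (2 * D) + L₂ * R * D + L₂ * R * D) * R)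
      + sewC (2 * γ) * (L₂ * R * R * D)) * |ξ - η| ^ γ := by
  have h1 := hA.nn₁
  have h2 := hA.nn₂
  have h3 := hA.nn₃
  have hR := h.hY.nonneg
  have hD := h.hol.nonneg
  have hC := (sewC_pos (by linarith : 1 < 2 * γ)).le
  set q := |ξ - η| ^ γ with hq
  have hq0 : 0 ≤ q := Real.rpow_nonneg (abs_nonneg _) _
  have goal_eq : (sewC (2 * γ) * ((L₃ * R * R * (2 * D) + L₂ * R * D + L₂ * R * D) * R)
      + sewC (2 * γ) * (L₂ * R * R * D)) * q =
      sewC (2 * γ) * (((L₃ * R * R * (2 * D) + L₂ * R * D + L₂ * R * D) * q) * R)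
      + sewC (2 * γ) * (L₂ * (R * q) * R * D) := by ring
  rw [goal_eq]
  refine (RSLimit.sub (RSLimit.sub hI hI') (RSLimit.sub hJ hJ')).norm_le fun P => ?_
  simp only [rsSum_sub_left]
  rw [rsSum_sub_sub]
  have hZq : ‖Z ξ - Z η‖ ≤ R * q := h.hZ ξ hξ η hη
  have hYq : ‖Y ξ - Y η‖ ≤ R * q := h.hY ξ hξ η hη
  have hlast : sewC (2 * γ) * (L₂ * ‖Z ξ - Z η‖ * R * D) ≤
      sewC (2 * γ) * (L₂ * (R * q) * R * D) := by gcongr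
  refine (norm_add_le _ _).trans (add_le_add
    (rsSum_le hγ ?_ h.hY h.cY P)
    ((rsSum_le hγ (HB_kernel_sub hA h.hZ (Z ξ) (Z η)) h.hol
      (by simp only [h.cY, h.cZ]) P).trans hlast))
  intro s hs t ht
  beta_reduce
  -- The arguments of `A` are the vertices of the parallelograms spanned by `u, v` and by their primed versions.
  set a := Y η - Y t with ha
  set a' := Z η - Z t with ha'
  set u := Y ξ - Y η with hu
  set u' := Z ξ - Z η with hu'
  set v := Y t - Y s with hv
  set v' := Z t - Z s with hv'
  have e1 : Y ξ - Y s = a + u + v := by simp only [ha, hu, hv]; abel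
  have e2 : Y η - Y s = a + v := by simp only [ha, hv]; abel
  have e3 : Y ξ - Y t = a + u := by simp only [ha, hu]; abel
  have e1' : Z ξ - Z s = a' + u' + v' := by simp only [ha', hu', hv']; abel
  have e2' : Z η - Z s = a' + v' := by simp only [ha', hv']; abel
  have e3' : Z ξ - Z t = a' + u' := by simp only [ha', hu']; abel
  set w := |s - t| ^ γ with hw
  have hw0 : 0 ≤ w := Real.rpow_nonneg (abs_nonneg _) _
  have hvR : ‖v‖ ≤ R * w := by
    rw [hv, norm_sub_rev]; exact h.hY s hs t ht
  have hvv : ‖v - v'‖ ≤ D * w := by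
    have e : v - v' = (Y t - Z t) - (Y s - Z s) := by simp only [hv, hv']; abel
    rw [e, norm_sub_rev]
    exact h.hol s hs t ht
  have huu : ‖u - u'‖ ≤ D * q := by
    have e : u - u' = (Y ξ - Z ξ) - (Y η - Z η) := by simp only [hu, hu']; abel
    rw [e]
    exact h.hol ξ hξ η hη
  have haa : ‖a - a'‖ ≤ 2 * D := by
    have e : a - a' = (Y η - Z η) - (Y t - Z t) := by simp only [ha, ha']; abel
    rw [e, two_mul]
    exact (norm_sub_le _ _).trans (add_le_add (h.sup η hη) (h.sup t ht))
  have t1 := hA.three a a' u v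
  have t2 := hA.two (a' + u) (a' + u') v
  rw [add_sub_add_left_eq_sub] at t2
  have t3 := hA.two (a' + v) (a' + v') u'
  rw [add_sub_add_left_eq_sub] at t3
  rw [e1, e2, e3, e1', e2', e3']
  calc _ = ‖(((A (a + u + v) - A (a + u)) - (A (a + v) - A a))
          - ((A (a' + u + v) - A (a' + u)) - (A (a' + v) - A a')))
        + ((A (a' + u + v) - A (a' + u)) - (A (a' + u' + v) - A (a' + u')))
        + ((A (a' + v + u') - A (a' + v)) - (A (a' + v' + u') - A (a' + v')))‖ := by
        rw [add_right_comm a' v u', add_right_comm a' v' u']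
        congr 1; abel
    _ ≤ L₃ * ‖u‖ * ‖v‖ * ‖a - a'‖ + L₂ * ‖v‖ * ‖u - u'‖ + L₂ * ‖u'‖ * ‖v - v'‖ :=
        (norm_add_le _ _).trans (add_le_add ((norm_add_le _ _).trans (add_le_add t1 t2)) t3)
    _ ≤ L₃ * (R * q) * (R * w) * (2 * D) + L₂ * (R * w) * (D * q) + L₂ * (R * q) * (D * w) := by
        gcongr
    _ = _ := by ring

end

/-! ### The Banach space of closed Hölder curves -/

/-- The parameter interval `[0,1]`. -/
abbrev UI : Type := Icc (0:ℝ) 1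

/-- Pairs of a bounded function on `[0,1]` and a bounded function on `[0,1]²`. -/
abbrev Amb : Type := lp (fun _ : UI => E3) ∞ × lp (fun _ : UI × UI => E3) ∞

/-- The Banach space `𝒞^γ`: a closed curve is stored together with its Hölder quotients, so that
the norm is `max ‖Y‖_∞ ‖Y‖_γ` and completeness is inherited from `Amb`. -/
def curveSpace (γ : ℝ) : Submodule ℝ Amb where
  carrier := {p | (∀ s t : UI, p.2 (s, t) = (|s.1 - t.1| ^ γ)⁻¹ • (p.1 s - p.1 t)) ∧ p.1 0 = p.1 1}
  add_mem' := by
    rintro p q ⟨hp, hp'⟩ ⟨hq, hq'⟩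
    refine ⟨fun s t => ?_, ?_⟩
    · simp only [Prod.snd_add, Prod.fst_add, lp.coeFn_add, Pi.add_apply, hp, hq, ← smul_add]
      congr 1; abel
    · simp only [Prod.fst_add, lp.coeFn_add, Pi.add_apply, hp', hq']
  zero_mem' := by
    refine ⟨fun s t => ?_, ?_⟩ <;> simp
  smul_mem' := by
    rintro c p ⟨hp, hp'⟩
    refine ⟨fun s t => ?_, ?_⟩
    · simp only [Prod.smul_snd, Prod.smul_fst, lp.coeFn_smul, Pi.smul_apply, hp, ← smul_sub]
      rw [smul_comm]
    · simp only [Prod.smul_fst, lp.coeFn_smul, Pi.smul_apply, hp']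

lemma curveSpace_isClosed (γ : ℝ) : IsClosed (curveSpace γ : Set Amb) := by
  have c1 : ∀ s : UI, Continuous fun p : Amb => p.1 s := fun s =>
    (lp.lipschitzWith_one_eval (E := fun _ : UI => E3) ∞ s).continuous.comp continuous_fst
  have c2 : ∀ s : UI × UI, Continuous fun p : Amb => p.2 s := fun s =>
    (lp.lipschitzWith_one_eval (E := fun _ : UI × UI => E3) ∞ s).continuous.comp continuous_snd
  have e : (curveSpace γ : Set Amb) =
      (⋂ s : UI, ⋂ t : UI, {p : Amb | p.2 (s, t) = (|s.1 - t.1| ^ γ)⁻¹ • (p.1 s - p.1 t)})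
        ∩ {p : Amb | p.1 0 = p.1 1} := by
    ext p
    simp only [mem_inter_iff, mem_iInter, mem_ofPred_eq]
    rfl
  rw [e]
  refine IsClosed.inter (isClosed_iInter fun s => isClosed_iInter fun t =>
    isClosed_eq (c2 _) (((c1 s).fun_sub (c1 t)).fun_const_smul _)) (isClosed_eq (c1 0) (c1 1))

instance (γ : ℝ) : CompleteSpace (curveSpace γ) :=
  (curveSpace_isClosed γ).completeSpace_coe

section
variable {γ : ℝ}

/-- The curve underlying a point of `curveSpace γ`, constant outside `[0,1]`. -/
def cv (p : curveSpace γ) (s : ℝ) : E3 := p.1.1 (projIcc 0 1 zero_le_one s)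

lemma cv_sub (p q : curveSpace γ) (s : ℝ) : cv (p - q) s = cv p s - cv q s := rfl

lemma cv_norm_le (p : curveSpace γ) (s : ℝ) : ‖cv p s‖ ≤ ‖p‖ :=
  (lp.norm_apply_le_norm (by simp) p.1.1 _).trans (le_max_left _ _)

/-- Evaluation of a curve at the parameter `s`, as a linear map. -/
def evalLin (γ s : ℝ) : curveSpace γ →ₗ[ℝ] E3 where
  toFun p := cv p s
  map_add' _ _ := rfl
  map_smul' _ _ := rfl

lemma evalLin_bound (s : ℝ) (p : curveSpace γ) : ‖evalLin γ s p‖ ≤ 1 * ‖p‖ := by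
  rw [one_mul]
  exact cv_norm_le p s

/-- Evaluation of a curve at the parameter `s`, as a continuous linear map. -/
def evalL (γ s : ℝ) : curveSpace γ →L[ℝ] E3 :=
  (evalLin γ s).mkContinuous 1 (evalLin_bound s)

lemma evalL_apply (s : ℝ) (p : curveSpace γ) : evalL γ s p = cv p s := rfl

lemma cv_hb (hγ : 0 < γ) (p : curveSpace γ) : HB γ ‖p‖ (cv p) := by
  intro s hs t ht
  rcases eq_or_ne s t with rfl | hst
  · simp [Real.zero_rpow hγ.ne']
  have hpos : 0 < |s - t| ^ γ := Real.rpow_pos_of_pos (abs_pos.2 (sub_ne_zero.2 hst)) _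
  have h := (lp.norm_apply_le_norm (by simp) p.1.2 ((⟨s, hs⟩, ⟨t, ht⟩) : UI × UI)).trans
    (le_max_right ‖p.1.1‖ _)
  rw [p.2.1, norm_smul, norm_inv, Real.norm_of_nonneg hpos.le, inv_mul_le_iff₀ hpos] at h
  unfold cv
  rw [projIcc_of_mem _ hs, projIcc_of_mem _ ht, mul_comm]
  exact h

lemma cv_closed (p : curveSpace γ) : cv p 0 = cv p 1 := by
  unfold cv
  rw [projIcc_left, projIcc_right]
  exact p.2.2

lemma cv_ext {p q : curveSpace γ} (h : ∀ s ∈ Icc (0:ℝ) 1, cv p s = cv q s) : p = q := by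
  have h1 : ∀ s : UI, p.1.1 s = q.1.1 s := fun s => by
    have := h s.1 s.2
    unfold cv at this
    rwa [projIcc_val] at this
  refine Subtype.ext (Prod.ext (lp.ext (funext h1)) (lp.ext (funext fun st => ?_)))
  obtain ⟨s, t⟩ := st
  rw [p.2.1, q.2.1, h1, h1]

lemma exists_cv {B : ℝ} {Y : ℝ → E3} (hs : ∀ s ∈ Icc (0:ℝ) 1, ‖Y s‖ ≤ B) (hh : HB γ B Y)
    (hc : Y 0 = Y 1) : ∃ p : curveSpace γ, ‖p‖ ≤ B ∧ ∀ s ∈ Icc (0:ℝ) 1, cv p s = Y s := by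
  have hB := hh.nonneg
  have b1 : ∀ s : UI, ‖Y s.1‖ ≤ B := fun s => hs s.1 s.2
  have b2 : ∀ st : UI × UI, ‖(|st.1.1 - st.2.1| ^ γ)⁻¹ • (Y st.1.1 - Y st.2.1)‖ ≤ B := by
    rintro ⟨s, t⟩
    have h0 : 0 ≤ |s.1 - t.1| ^ γ := Real.rpow_nonneg (abs_nonneg _) _
    rw [norm_smul, norm_inv, Real.norm_of_nonneg h0]
    exact inv_mul_le_of_le_mul₀ h0 hB (by rw [mul_comm]; exact hh s.1 s.2 t.1 t.2)
  let f : lp (fun _ : UI => E3) ∞ :=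
    ⟨fun s => Y s.1, memℓp_infty ⟨B, by rintro _ ⟨s, rfl⟩; exact b1 s⟩⟩
  let g : lp (fun _ : UI × UI => E3) ∞ :=
    ⟨fun st => (|st.1.1 - st.2.1| ^ γ)⁻¹ • (Y st.1.1 - Y st.2.1),
      memℓp_infty ⟨B, by rintro _ ⟨s, rfl⟩; exact b2 s⟩⟩
  refine ⟨⟨(f, g), fun s t => rfl, hc⟩, ?_, fun s hs => ?_⟩
  · exact max_le (lp.norm_le_of_forall_le hB b1) (lp.norm_le_of_forall_le hB b2)
  · unfold cv
    rw [projIcc_of_mem _ hs]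

/-! ### Comparison with the norm `hStar` -/

lemma hStar_le {Y : ℝ → E3} {B : ℝ} (hs : ∀ s ∈ Icc (0:ℝ) 1, ‖Y s‖ ≤ B) (hh : HB γ B Y) :
    hStar γ Y ≤ 2 * B := by
  have hB := hh.nonneg
  have h1 : sNorm Y ≤ B := Real.sSup_le (by rintro _ ⟨s, hs', rfl⟩; exact hs s hs') hB
  have h2 : hSemi γ Y ≤ B := by
    refine Real.sSup_le ?_ hB
    rintro _ ⟨s, hs, t, ht, -, rfl⟩
    exact div_le_of_le_mul₀ (Real.rpow_nonneg (abs_nonneg _) _) hB (hh s hs t ht)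
  unfold hStar
  linarith

lemma hStar_cv_le (hγ : 0 < γ) (p : curveSpace γ) : hStar γ (cv p) ≤ 2 * ‖p‖ :=
  hStar_le (fun s _ => cv_norm_le p s) (cv_hb hγ p)

lemma memC_of_hb (hγ : 0 < γ) {Y : ℝ → E3} {B : ℝ} (hh : HB γ B Y) (hc : Y 0 = Y 1) :
    MemC γ Y := by
  refine ⟨⟨?_, hc⟩, B, hh⟩
  intro t ht
  have h0 : Tendsto (fun s : ℝ => B * |s - t| ^ γ) (𝓝[Icc 0 1] t) (𝓝 0) := by
    have : ContinuousAt (fun s : ℝ => B * |s - t| ^ γ) t := by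
      refine ContinuousAt.mul continuousAt_const
        (ContinuousAt.rpow_const (by fun_prop) (Or.inr hγ.le))
    have := this.tendsto
    simp only [sub_self, abs_zero, Real.zero_rpow hγ.ne', mul_zero] at this
    exact this.mono_left nhdsWithin_le_nhds
  refine tendsto_iff_norm_sub_tendsto_zero.2 (squeeze_zero' ?_ ?_ h0)
  · exact Eventually.of_forall fun s => norm_nonneg _
  · filter_upwards [self_mem_nhdsWithin] with s hs using hh s hs t ht

lemma MemC.bounds {Y : ℝ → E3} (hγ : 0 < γ) (hY : MemC γ Y) :
    (∀ s ∈ Icc (0:ℝ) 1, ‖Y s‖ ≤ hStar γ Y) ∧ HB γ (hStar γ Y) Y := by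
  obtain ⟨⟨hcont, -⟩, C, hC⟩ := hY
  have b1 : BddAbove {r | ∃ s ∈ Icc (0:ℝ) 1, r = ‖Y s‖} := by
    obtain ⟨M, hM⟩ := isCompact_Icc.exists_bound_of_continuousOn hcont
    exact ⟨M, by rintro _ ⟨s, hs, rfl⟩; exact hM s hs⟩
  have hC0 : 0 ≤ C := HB.nonneg hC
  have b2 : BddAbove {r | ∃ s ∈ Icc (0:ℝ) 1, ∃ t ∈ Icc (0:ℝ) 1, s ≠ t ∧
      r = ‖Y s - Y t‖ / |s - t| ^ γ} := by
    refine ⟨C, ?_⟩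
    rintro _ ⟨s, hs, t, ht, -, rfl⟩
    exact div_le_of_le_mul₀ (Real.rpow_nonneg (abs_nonneg _) _) hC0 (hC s hs t ht)
  have n1 : 0 ≤ sNorm Y := Real.sSup_nonneg (by rintro _ ⟨s, -, rfl⟩; exact norm_nonneg _)
  have n2 : 0 ≤ hSemi γ Y := Real.sSup_nonneg (by
    rintro _ ⟨s, -, t, -, -, rfl⟩
    exact div_nonneg (norm_nonneg _) (Real.rpow_nonneg (abs_nonneg _) _))
  refine ⟨fun s hs => ?_, fun s hs t ht => ?_⟩
  · have : ‖Y s‖ ≤ sNorm Y := le_csSup b1 ⟨s, hs, rfl⟩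
    unfold hStar; linarith
  · rcases eq_or_ne s t with rfl | hst
    · simp [Real.zero_rpow hγ.ne']
    have hpos : 0 < |s - t| ^ γ := Real.rpow_pos_of_pos (abs_pos.2 (sub_ne_zero.2 hst)) _
    have : ‖Y s - Y t‖ / |s - t| ^ γ ≤ hSemi γ Y := le_csSup b2 ⟨s, hs, t, ht, hst, rfl⟩
    rw [← div_le_iff₀ hpos]
    unfold hStar; linarith

lemma MemC.exists_cv (hγ : 0 < γ) {Y : ℝ → E3} (hY : MemC γ Y) :
    ∃ p : curveSpace γ, ‖p‖ ≤ hStar γ Y ∧ ∀ s ∈ Icc (0:ℝ) 1, cv p s = Y s :=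
  _root_.exists_cv (hY.bounds hγ).1 (hY.bounds hγ).2 hY.1.2

lemma hStar_congr {Y Z : ℝ → E3} (h : ∀ s ∈ Icc (0:ℝ) 1, Y s = Z s) : hStar γ Y = hStar γ Z := by
  unfold hStar sNorm hSemi
  congr 2
  · ext r
    exact exists_congr fun s => and_congr_right fun hs => by rw [h s hs]
  · ext r
    refine exists_congr fun s => and_congr_right fun hs => exists_congr fun t =>
      and_congr_right fun ht => by rw [h s hs, h t ht]

lemma norm_le_hStar (hγ : 0 < γ) (p : curveSpace γ) : ‖p‖ ≤ hStar γ (cv p) := by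
  obtain ⟨q, hq, hq'⟩ := (memC_of_hb hγ (cv_hb hγ p) (cv_closed p)).exists_cv hγ
  rwa [cv_ext hq'] at hq

end

/-! ### Ordinary differential equations with a locally Lipschitz vector field -/

section
variable {E : Type*} [NormedAddCommGroup E] {G : E → E}

/-- `G` is Lipschitz on every ball centred at the origin. -/
def LipBalls (G : E → E) : Prop :=
  ∀ R : ℝ, ∃ K : NNReal, LipschitzOnWith K G (Metric.closedBall 0 R)

lemma LipBalls.continuous (hG : LipBalls G) : Continuous G := by
  refine continuous_iff_continuousAt.2 fun x => ?_
  obtain ⟨K, hK⟩ := hG (‖x‖ + 1)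
  refine hK.continuousOn.continuousAt (mem_of_superset (Metric.ball_mem_nhds x one_pos) ?_)
  intro y hy
  rw [mem_closedBall_zero_iff]
  have h1 : ‖y - x‖ < 1 := by rwa [Metric.mem_ball, dist_eq_norm] at hy
  have h2 : ‖y‖ ≤ ‖x‖ + ‖y - x‖ := norm_le_norm_add_norm_sub' y x
  linarith

/-- The integral equation for a locally Lipschitz vector field has exactly one continuous solution
on `[0,T]`, where `T` is controlled by a bound on the vector field in the unit ball around the
initial value. -/
lemma integral_equation [NormedSpace ℝ E] [CompleteSpace E] (hG : LipBalls G) (x₀ : E)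
    {M T : ℝ} (hM0 : 0 ≤ M)
    (hM : ∀ x ∈ Metric.closedBall x₀ 1, ‖G x‖ ≤ M) (hT : 0 < T) (hMT : M * T ≤ 1) :
    ∃ α : ℝ → E, ContinuousOn α (Icc 0 T) ∧
      (∀ t ∈ Icc 0 T, α t = x₀ + ∫ s in (0:ℝ)..t, G (α s)) ∧
      ∀ z : ℝ → E, ContinuousOn z (Icc 0 T) →
        (∀ t ∈ Icc 0 T, z t = x₀ + ∫ s in (0:ℝ)..t, G (z s)) → EqOn z α (Icc 0 T) := by
  have hGc := hG.continuous
  obtain ⟨K, hK⟩ := hG (‖x₀‖ + 1)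
  have hsub : Metric.closedBall x₀ 1 ⊆ Metric.closedBall 0 (‖x₀‖ + 1) := by
    intro y hy
    rw [mem_closedBall_iff_norm] at hy
    rw [mem_closedBall_zero_iff]
    have h2 : ‖y‖ ≤ ‖x₀‖ + ‖y - x₀‖ := norm_le_norm_add_norm_sub' y x₀
    linarith
  have hPL : IsPicardLindelof (fun _ => G) (⟨0, le_rfl, hT.le⟩ : Icc 0 T) x₀ 1 0 ⟨M, hM0⟩ K := by
    refine IsPicardLindelof.of_time_independent (fun x hx => hM x (by simpa using hx)) ?_ ?_
    · simpa using hK.mono hsub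
    · change M * max (T - 0) (0 - 0) ≤ 1 - 0
      simpa [max_eq_left hT.le] using hMT
  obtain ⟨α, hα0, hα⟩ := hPL.exists_eq_forall_mem_Icc_hasDerivWithinAt₀
  have hαc : ContinuousOn α (Icc 0 T) := fun t ht => (hα t ht).continuousWithinAt
  have hαr : ∀ t ∈ Ico 0 T, HasDerivWithinAt α (G (α t)) (Ici t) t := fun t ht =>
    (hα t ⟨ht.1, ht.2.le⟩).mono_of_mem_nhdsWithin (Icc_mem_nhdsGE_of_mem ht)
  have hGα : ContinuousOn (fun s => G (α s)) (Icc 0 T) := hGc.comp_continuousOn hαc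
  refine ⟨α, hαc, fun t ht => ?_, fun z hz hzs => ?_⟩
  · rw [intervalIntegral.integral_eq_sub_of_hasDeriv_right_of_le ht.1
      (hαc.mono (Icc_subset_Icc_right ht.2))
      (fun s hs => (hαr s ⟨hs.1.le, hs.2.trans_le ht.2⟩).mono Ioi_subset_Ici_self)
      ((hGα.mono (Icc_subset_Icc_right ht.2)).intervalIntegrable_of_Icc ht.1)]
    rw [show α 0 = x₀ from hα0]
    abel
  -- `w` is a globally defined `C¹` function which agrees with `z` on `[0,T]`.
  · set g : ℝ → E := fun s => G (IccExtend hT.le ((Icc 0 T).domRestrict z) s) with hg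
    have hgc : Continuous g := hGc.comp (hz.domRestrict.Icc_extend')
    have hgz : ∀ s ∈ Icc 0 T, g s = G (z s) := fun s hs => by
      simp only [hg]
      rw [IccExtend_of_mem _ _ hs]; rfl
    set w : ℝ → E := fun t => x₀ + ∫ s in (0:ℝ)..t, g s with hw
    have hwz : ∀ t ∈ Icc 0 T, w t = z t := fun t ht => by
      rw [hzs t ht]
      simp only [hw]
      congr 1
      refine intervalIntegral.integral_congr fun s hs => hgz s ?_
      rw [uIcc_of_le ht.1] at hs
      exact ⟨hs.1, hs.2.trans ht.2⟩
    have hwd : ∀ t, HasDerivAt w (g t) t := fun t =>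
      (intervalIntegral.integral_hasDerivAt_right (hgc.intervalIntegrable _ _)
        (hgc.stronglyMeasurableAtFilter _ _) hgc.continuousAt).const_add x₀
    obtain ⟨R₁, hR₁⟩ := isCompact_Icc.exists_bound_of_continuousOn hαc
    obtain ⟨R₂, hR₂⟩ := isCompact_Icc.exists_bound_of_continuousOn hz
    obtain ⟨K', hK'⟩ := hG (max R₁ R₂)
    have key : EqOn w α (Icc 0 T) := by
      refine ODE_solution_unique_of_mem_Icc_right (v := fun _ => G)
        (s := fun _ => Metric.closedBall 0 (max R₁ R₂)) (fun _ _ => hK')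
        (fun t _ => (hwd t).continuousAt.continuousWithinAt) (fun t ht => ?_) (fun t ht => ?_)
        hαc hαr (fun t ht => ?_) ?_
      · have ht' : t ∈ Icc 0 T := ⟨ht.1, ht.2.le⟩
        rw [hwz t ht', ← hgz t ht']
        exact (hwd t).hasDerivWithinAt
      · have ht' : t ∈ Icc 0 T := ⟨ht.1, ht.2.le⟩
        rw [hwz t ht', mem_closedBall_zero_iff]
        exact (hR₂ t ht').trans (le_max_right _ _)
      · rw [mem_closedBall_zero_iff]
        exact (hR₁ t ⟨ht.1, ht.2.le⟩).trans (le_max_left _ _)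
      · rw [show α 0 = x₀ from hα0]
        simp [hw]
    exact fun t ht => (hwz t ht).symm.trans (key ht)

end

/-! ### The velocity as a vector field on the space of curves -/

section
variable {γ : ℝ} {A : E3 → M3} {L₁ L₂ L₃ : ℝ}

lemma rsSum_congr {f g : ℝ → M3} {Y Z : ℝ → E3} (hfg : ∀ s ∈ Icc (0:ℝ) 1, f s = g s)
    (hYZ : ∀ s ∈ Icc (0:ℝ) 1, Y s = Z s) (P : Ptn 0 1) : rsSum f Y P = rsSum g Z P := by
  rw [rsSum_eq_ext, rsSum_eq_ext]
  refine Finset.sum_congr rfl fun i _ => ?_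
  rw [hfg _ (P.ext_mem _), hYZ _ (P.ext_mem _), hYZ _ (P.ext_mem _)]

lemma IsVel.congr {Y Z : ℝ → E3} (hYZ : ∀ s ∈ Icc (0:ℝ) 1, Y s = Z s) {x I : E3}
    (h : IsVel A Y x I) : IsVel A Z x I := by
  have e : rsSum (fun ρ => A (x - Y ρ)) Y = rsSum (fun ρ => A (x - Z ρ)) Z :=
    funext fun P => rsSum_congr (fun s hs => by rw [hYZ s hs]) hYZ P
  unfold IsVel at h ⊢
  rwa [e] at h

/-- The curve `ξ ↦ V^Y(Y_ξ)` is again a closed `γ`-Hölder curve. -/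
lemma velocity_curve (hγ : 1 / 2 < γ) (hA : FDBounds A L₁ L₂ L₃) (p : curveSpace γ) :
    ∃ q : curveSpace γ, (∀ ξ ∈ Icc (0:ℝ) 1, IsVel A (cv p) (cv p ξ) (cv q ξ)) ∧
      ‖q‖ ≤ sewC (2 * γ) * (L₁ + L₂) * (‖p‖ ^ 2 + ‖p‖ ^ 3) := by
  have h1 := hA.nn₁
  have h2 := hA.nn₂
  have hp := norm_nonneg p
  have hC := (sewC_pos (by linarith : 1 < 2 * γ)).le
  have hb := cv_hb (by linarith) p
  choose I hI using fun ξ => vel_exists hγ hA hb (cv p ξ)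
  have c1 : 0 ≤ sewC (2 * γ) * L₁ * ‖p‖ ^ 2 := by positivity
  have c2 : 0 ≤ sewC (2 * γ) * L₂ * ‖p‖ ^ 2 := by positivity
  have c3 : 0 ≤ sewC (2 * γ) * L₁ * ‖p‖ ^ 3 := by positivity
  have c4 : 0 ≤ sewC (2 * γ) * L₂ * ‖p‖ ^ 3 := by positivity
  obtain ⟨q, hq, hq'⟩ := exists_cv (γ := γ) (Y := I)
    (B := sewC (2 * γ) * (L₁ + L₂) * (‖p‖ ^ 2 + ‖p‖ ^ 3))
    (fun ξ _ => by
      have := vel_bound hγ hA hb (cv_closed p) (hI ξ)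
      nlinarith)
    (fun ξ hξ η hη => by
      have hpos : 0 ≤ |ξ - η| ^ γ := Real.rpow_nonneg (abs_nonneg _) _
      have hx := hb ξ hξ η hη
      calc _ ≤ sewC (2 * γ) * (L₂ * ‖cv p ξ - cv p η‖ * ‖p‖ * ‖p‖) :=
            vel_lip hγ hA hb (cv_closed p) (hI ξ) (hI η)
        _ ≤ sewC (2 * γ) * (L₂ * (‖p‖ * |ξ - η| ^ γ) * ‖p‖ * ‖p‖) := by gcongr
        _ = sewC (2 * γ) * L₂ * ‖p‖ ^ 3 * |ξ - η| ^ γ := by ring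
        _ ≤ _ := by
          refine mul_le_mul_of_nonneg_right ?_ hpos
          nlinarith)
    (RSLimit.unique (hI 0) (by have := hI 1; rwa [← cv_closed p] at this))
  exact ⟨q, fun ξ hξ => by rw [hq' ξ hξ]; exact hI ξ, hq⟩

/-- The vector field `Y ↦ V^Y(Y)` on the space of curves. -/
def velField (hγ : 1 / 2 < γ) (hA : FDBounds A L₁ L₂ L₃) (p : curveSpace γ) : curveSpace γ :=
  (velocity_curve hγ hA p).choose

lemma velField_isVel (hγ : 1 / 2 < γ) (hA : FDBounds A L₁ L₂ L₃) (p : curveSpace γ)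
    {ξ : ℝ} (hξ : ξ ∈ Icc (0:ℝ) 1) : IsVel A (cv p) (cv p ξ) (cv (velField hγ hA p) ξ) :=
  (velocity_curve hγ hA p).choose_spec.1 ξ hξ

lemma velField_norm_le (hγ : 1 / 2 < γ) (hA : FDBounds A L₁ L₂ L₃) (p : curveSpace γ) :
    ‖velField hγ hA p‖ ≤ sewC (2 * γ) * (L₁ + L₂) * (‖p‖ ^ 2 + ‖p‖ ^ 3) :=
  (velocity_curve hγ hA p).choose_spec.2

/-- The Lipschitz constant involves the third order differences of `A`, because the Hölder seminorm
of the difference of two velocities compares second order differences of `A` at two points. -/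
lemma velField_lipBalls (hγ : 1 / 2 < γ) (hA : FDBounds A L₁ L₂ L₃) :
    LipBalls (velField hγ hA) := by
  intro R'
  set R := max R' 0 with hR
  have hR0 : 0 ≤ R := le_max_right _ _
  have h1 := hA.nn₁
  have h2 := hA.nn₂
  have h3 := hA.nn₃
  have hC := (sewC_pos (by linarith : 1 < 2 * γ)).le
  set K₁ := sewC (2 * γ) * ((L₂ * R * 2 + L₁) * R) + sewC (2 * γ) * (L₁ * R) with hK₁
  set K₂ := sewC (2 * γ) * ((L₃ * R * R * 2 + L₂ * R + L₂ * R) * R) + sewC (2 * γ) * (L₂ * R * R)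
    with hK₂
  have hK₁0 : 0 ≤ K₁ := by positivity
  have hK₂0 : 0 ≤ K₂ := by positivity
  refine ⟨⟨K₁ + K₂, by positivity⟩, LipschitzOnWith.of_dist_le_mul fun p hp q hq => ?_⟩
  rw [mem_closedBall_zero_iff] at hp hq
  replace hp : ‖p‖ ≤ R := hp.trans (le_max_left _ _)
  replace hq : ‖q‖ ≤ R := hq.trans (le_max_left _ _)
  rw [dist_eq_norm, dist_eq_norm]
  set D := ‖p - q‖ with hD
  have hD0 : 0 ≤ D := norm_nonneg _
  have hγ0 : 0 < γ := by linarith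
  have hcl : Close γ R D (cv p) (cv q) :=
    { hY := fun s hs t ht => (cv_hb hγ0 p s hs t ht).trans (by gcongr)
      hZ := fun s hs t ht => (cv_hb hγ0 q s hs t ht).trans (by gcongr)
      cY := cv_closed p
      cZ := cv_closed q
      sup := fun s _ => cv_norm_le (p - q) s
      hol := cv_hb hγ0 (p - q) }
  have i1 := fun {ξ : ℝ} (hξ : ξ ∈ Icc (0:ℝ) 1) => velField_isVel hγ hA p hξ
  have i2 := fun {ξ : ℝ} (hξ : ξ ∈ Icc (0:ℝ) 1) => velField_isVel hγ hA q hξ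
  obtain ⟨r, hr, hr'⟩ := exists_cv (γ := γ) (B := (K₁ + K₂) * D)
    (Y := fun ξ => cv (velField hγ hA p) ξ - cv (velField hγ hA q) ξ)
    (fun ξ hξ => by
      have := vel_diff_sup hγ hA hcl hξ (i1 hξ) (i2 hξ)
      calc _ ≤ _ := this
        _ = K₁ * D := by rw [hK₁]; ring
        _ ≤ _ := by gcongr; linarith)
    (fun ξ hξ η hη => by
      have := vel_diff_hol hγ hA hcl hξ hη (i1 hξ) (i2 hξ) (i1 hη) (i2 hη)
      have hpos : 0 ≤ |ξ - η| ^ γ := Real.rpow_nonneg (abs_nonneg _) _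
      beta_reduce
      rw [sub_sub_sub_comm]
      calc _ ≤ _ := this
        _ = K₂ * D * |ξ - η| ^ γ := by rw [hK₂]; ring
        _ ≤ _ := by gcongr; linarith)
    (by simp only [cv_closed])
  have e : r = velField hγ hA p - velField hγ hA q :=
    cv_ext fun s hs => (hr' s hs).trans (cv_sub _ _ _).symm
  rw [← e]
  exact hr

end

/-- local existence and uniqueness, Young case. For `1/2 < γ ≤ 1` there is a
function `τ` (so that `T₀ = τ(‖∇A‖_1, ‖X‖_γ^*) > 0` depends only on `‖∇A‖_1`, `‖X‖_γ^*`, `γ`)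
such that for every `A` with `‖∇A‖_2 < ∞` and `X ∈ 𝒞^γ` the integral equation
`Y(t)_ξ = X_ξ + ∫_0^t V^{Y(s)}(Y(s)_ξ) ds` has a unique solution in `C([0,T₀],𝒞^γ)`
bounded in `𝒞^γ`. -/
theorem statement_7 (γ : ℝ) (hγ : 1 / 2 < γ) (hγ1 : γ ≤ 1) :
    ∃ τ : ℝ → ℝ → ℝ,
      ∀ A : E3 → M3, NablaBdd 1 2 A →
      ∀ X : ℝ → E3, MemC γ X →
      ∀ T0 : ℝ, T0 = τ (nablaNorm 1 1 A) (hStar γ X) →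
        0 < T0 ∧
        ∃ Y : ℝ → ℝ → E3,
          MemXT γ T0 Y ∧
          BddAbove {r : ℝ | ∃ t ∈ Icc 0 T0, r = hStar γ (Y t)} ∧
          IsYoungSolution T0 A X Y ∧
          ∀ Z : ℝ → ℝ → E3,
            MemXT γ T0 Z →
            BddAbove {r : ℝ | ∃ t ∈ Icc 0 T0, r = hStar γ (Z t)} →
            IsYoungSolution T0 A X Z →
            ∀ t ∈ Icc 0 T0, ∀ ξ ∈ Icc (0:ℝ) 1, Z t ξ = Y t ξ := by
  have hγ0 : 0 < γ := by linarith
  have hC := sewC_pos (by linarith : 1 < 2 * γ)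
  -- The velocity is bounded by `C N (R² + R³)` on the unit ball around `X`, where `R = ‖X‖ + 1`.
  refine ⟨fun N x => 1 / (sewC (2 * γ) * |N| * ((|x| + 1) ^ 2 + (|x| + 1) ^ 3) + 1), ?_⟩
  intro A hA X hX T0 hT0
  have hN : nablaNorm 1 1 A = tnorm 1 A + tnorm 2 A := by
    simp [nablaNorm, Finset.sum_range_succ]
  have hF := hA.fdBounds
  have hNn : 0 ≤ tnorm 1 A + tnorm 2 A := add_nonneg hF.nn₁ hF.nn₂
  obtain ⟨x₀, hx₀, hx₀X⟩ := hX.exists_cv hγ0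
  have hXn : 0 ≤ hStar γ X := (norm_nonneg _).trans hx₀
  beta_reduce at hT0
  rw [hN, abs_of_nonneg hNn, abs_of_nonneg hXn] at hT0
  set M := sewC (2 * γ) * (tnorm 1 A + tnorm 2 A) * ((hStar γ X + 1) ^ 2 + (hStar γ X + 1) ^ 3)
    with hM
  have hM0 : 0 ≤ M := by positivity
  have hTpos : 0 < T0 := by rw [hT0]; positivity
  have hMT : M * T0 ≤ 1 := by
    rw [hT0, mul_one_div, div_le_one (by positivity)]
    linarith
  set G := velField hγ hF with hG
  have hGL : LipBalls G := velField_lipBalls hγ hF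
  have hGc := hGL.continuous
  have hGM : ∀ x ∈ Metric.closedBall x₀ 1, ‖G x‖ ≤ M := by
    intro x hx
    rw [mem_closedBall_iff_norm] at hx
    have hxn : ‖x‖ ≤ hStar γ X + 1 := by
      have : ‖x‖ ≤ ‖x₀‖ + ‖x - x₀‖ := norm_le_norm_add_norm_sub' x x₀
      linarith
    refine (velField_norm_le hγ hF x).trans ?_
    rw [hM]
    gcongr
  -- Evaluating a curve-valued integral equation at a parameter.
  have hev : ∀ z : ℝ → curveSpace γ, ContinuousOn z (Icc 0 T0) → ∀ t ∈ Icc 0 T0,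
      ∀ ξ ∈ Icc (0:ℝ) 1, cv (x₀ + ∫ s in (0:ℝ)..t, G (z s)) ξ =
        X ξ + ∫ s in (0:ℝ)..t, cv (G (z s)) ξ := by
    intro z hz t ht ξ hξ
    have hintble : IntervalIntegrable (fun s => G (z s)) volume 0 t :=
      ((hGc.comp_continuousOn hz).mono (Icc_subset_Icc_right ht.2)).intervalIntegrable_of_Icc ht.1
    have h := (evalL γ ξ).intervalIntegral_comp_comm hintble
    rw [← evalL_apply, map_add, ← h, evalL_apply, hx₀X ξ hξ]
    rfl
  obtain ⟨α, hαc, hαs, hαu⟩ := integral_equation hGL x₀ hM0 hGM hTpos hMT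
  refine ⟨hTpos, fun t => cv (α t), ⟨fun t _ => memC_of_hb hγ0 (cv_hb hγ0 _) (cv_closed _), ?_⟩,
    ?_, ?_, ?_⟩
  · intro t ht ε hε
    obtain ⟨δ, hδ, h⟩ := Metric.continuousOn_iff.1 hαc t ht (ε / 2) (by linarith)
    refine ⟨δ / 2, by linarith, fun s hs hst => ?_⟩
    have h' := h s hs (by rw [Real.dist_eq]; linarith)
    rw [dist_eq_norm] at h'
    have := hStar_cv_le hγ0 (α s - α t)
    have e : hStar γ (fun ξ => cv (α s) ξ - cv (α t) ξ) = hStar γ (cv (α s - α t)) := rfl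
    rw [e]
    linarith
  · obtain ⟨B, hB⟩ := isCompact_Icc.exists_bound_of_continuousOn hαc
    refine ⟨2 * B, ?_⟩
    rintro _ ⟨t, ht, rfl⟩
    have := hStar_cv_le hγ0 (α t)
    have := hB t ht
    linarith
  · choose V hV using fun (s : ℝ) (x : E3) => vel_exists hγ hF (cv_hb hγ0 (α s)) x
    refine ⟨V, fun s _ x => hV s x, fun t ht ξ hξ => ?_⟩
    have h1 := congrArg (fun p => cv p ξ) (hαs t ht)
    simp only [hev α hαc t ht ξ hξ] at h1
    beta_reduce
    rw [h1]
    congr 1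
    exact intervalIntegral.integral_congr fun s _ =>
      RSLimit.unique (velField_isVel hγ hF (α s) hξ) (hV s _)
  · rintro Z ⟨hZC, hZc⟩ - ⟨v, hv, hZs⟩ t ht ξ hξ
    choose! z hzn hzZ using fun s (hs : s ∈ Icc 0 T0) => (hZC s hs).exists_cv hγ0
    have hzc : ContinuousOn z (Icc 0 T0) := by
      refine Metric.continuousOn_iff.2 fun t ht ε hε => ?_
      obtain ⟨δ, hδ, h⟩ := hZc t ht (ε / 2) (by linarith)
      refine ⟨δ, hδ, fun s hs hst => ?_⟩
      rw [Real.dist_eq] at hst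
      have h' := h s hs hst.le
      have h2 := norm_le_hStar hγ0 (z s - z t)
      have e : hStar γ (cv (z s - z t)) = hStar γ (fun ξ => Z s ξ - Z t ξ) :=
        hStar_congr fun ρ hρ => by rw [cv_sub, hzZ s hs ρ hρ, hzZ t ht ρ hρ]
      rw [dist_eq_norm]
      linarith
    have hzs : ∀ t ∈ Icc 0 T0, z t = x₀ + ∫ s in (0:ℝ)..t, G (z s) := by
      intro t ht
      refine cv_ext fun ξ hξ => ?_
      rw [hev z hzc t ht ξ hξ, hzZ t ht ξ hξ, hZs t ht ξ hξ]
      congr 1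
      refine intervalIntegral.integral_congr fun s hs => ?_
      rw [uIcc_of_le ht.1] at hs
      have hs' : s ∈ Icc 0 T0 := ⟨hs.1, hs.2.trans ht.2⟩
      have h1 := (velField_isVel hγ hF (z s) hξ).congr (hzZ s hs')
      rw [hzZ s hs' ξ hξ] at h1
      exact RSLimit.unique (hv s hs' (Z s ξ)) h1
    rw [← hzZ t ht ξ hξ, hαu z hzc hzs ht]

end
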